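/- arXiv:2412.15463 — 3 statements merged into one kernel-verified Lean document; each statement's English description precedes it below -/
import Mathlib

section
/- Let d ≥ 3, Ω = {1,…,d}, and let F ≤ F' ≤ Sym(Ω) be permutation groups such that every element of F' maps each F-orbit onto itself and F' acts 2-transitively on Ω. Let T be a legally colored d-regular tree. Then G(F,F') acts transitively on ordered geodesic segments of every fixed length: for all vertices x, y, x', y' of T with d(x,y) = d(x',y'), there exists g ∈ G(F,F') with g·x = x' and g·y = y'. Moreover, for every geodesic line L in T and all vertices x, y of T there exists g ∈ G(F,F') such that g·[x,y] ⊆ L(ℤ) and d(x, g·x) is even. -/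
/-- The automorphism group of a simple graph, as a subgroup of the permutation
group of its vertex set. -/
def SimpleGraph.autSubgroup {V : Type*} (T : SimpleGraph V) : Subgroup (Equiv.Perm V) where
  carrier := {e | ∀ u v : V, T.Adj (e u) (e v) ↔ T.Adj u v}
  one_mem' := fun _ _ => Iff.rfl
  mul_mem' := by
    intro a b ha hb u v
    simp only [Equiv.Perm.mul_apply]
    rw [ha, hb]
  inv_mem' := by
    intro a ha u v
    simpa using (ha (a⁻¹ u) (a⁻¹ v)).symm

/-- A legal coloring of a `d`-regular tree: every vertex's edges are colored
bijectively with the colors `Fin d`. The color of the edge `{u, v}` is `color u v`. -/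
structure LegalColoring {V : Type*} (T : SimpleGraph V) (d : ℕ) where
  color : V → V → Fin d
  symm : ∀ ⦃u v : V⦄, T.Adj u v → color u v = color v u
  bij : ∀ (v : V) (i : Fin d), ∃! w : V, T.Adj v w ∧ color v w = i

/-- The local permutation `σ(g, v)` of an automorphism `g` at a vertex `v`
belongs to the permutation group `F`. -/
def LocalIn {V : Type*} {d : ℕ} (T : SimpleGraph V) (C : LegalColoring T d)
    (F : Subgroup (Equiv.Perm (Fin d))) (g : Equiv.Perm V) (v : V) : Prop :=
  ∃ π ∈ F, ∀ ⦃w : V⦄, T.Adj v w → C.color (g v) (g w) = π (C.color v w)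

/-- The universal Burger–Mozes group `U(F)` (as a set of permutations of the vertices):
automorphisms whose local permutation lies in `F` at every vertex. -/
def USet {V : Type*} {d : ℕ} (T : SimpleGraph V) (C : LegalColoring T d)
    (F : Subgroup (Equiv.Perm (Fin d))) : Set (Equiv.Perm V) :=
  {g | g ∈ T.autSubgroup ∧ ∀ v : V, LocalIn T C F g v}

/-- The group `G(F)`: automorphisms whose local permutation lies in `F` at all but
finitely many vertices. -/
def GSet {V : Type*} {d : ℕ} (T : SimpleGraph V) (C : LegalColoring T d)
    (F : Subgroup (Equiv.Perm (Fin d))) : Set (Equiv.Perm V) :=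
  {g | g ∈ T.autSubgroup ∧ {v : V | ¬ LocalIn T C F g v}.Finite}

/-- Le Boudec's group `G(F, F')` with almost prescribed local action (as a set of
permutations of the vertices): `G(F) ∩ U(F')`. -/
def GFFSet {V : Type*} {d : ℕ} (T : SimpleGraph V) (C : LegalColoring T d)
    (F F' : Subgroup (Equiv.Perm (Fin d))) : Set (Equiv.Perm V) :=
  GSet T C F ∩ USet T C F'

section Trees

variable {V : Type*} {T : SimpleGraph V}

theorem SimpleGraph.Connected.exists_adj_dist_succ (hT : T.Connected) {r v : V} (h : v ≠ r) :
    ∃ w, T.Adj w v ∧ T.dist r v = T.dist r w + 1 := by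
  obtain ⟨p, hp⟩ := hT.exists_walk_length_eq_dist r v
  have hn : ¬ p.Nil := fun hnil => h hnil.eq.symm
  have hadj := p.adj_penultimate hn
  refine ⟨p.penultimate, hadj, ?_⟩
  have h1 : T.dist r p.penultimate ≤ p.dropLast.length := SimpleGraph.dist_le _
  have h2 : p.dropLast.length + 1 = p.length := p.length_dropLast_add_one hn
  have h3 : T.dist r v ≤ T.dist r p.penultimate + T.dist p.penultimate v := hT.dist_triangle
  have h4 := SimpleGraph.dist_eq_one_iff_adj.2 hadj
  omega

theorem SimpleGraph.IsTree.eq_of_adj_of_dist_succ (hT : T.IsTree) {r v w w' : V}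
    (h : T.Adj w v) (hd : T.dist r v = T.dist r w + 1)
    (h' : T.Adj w' v) (hd' : T.dist r v = T.dist r w' + 1) : w = w' := by
  obtain ⟨p, hp⟩ := hT.connected.exists_walk_length_eq_dist r w
  obtain ⟨q, hq⟩ := hT.connected.exists_walk_length_eq_dist r w'
  have h1 : (p.concat h).IsPath := SimpleGraph.Walk.isPath_of_length_eq_dist _ (by
    rw [SimpleGraph.Walk.length_concat, hp, hd])
  have h2 : (q.concat h').IsPath := SimpleGraph.Walk.isPath_of_length_eq_dist _ (by
    rw [SimpleGraph.Walk.length_concat, hq, hd'])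
  have h3 := (hT.existsUnique_path r v).unique h1 h2
  have h4 := congrArg SimpleGraph.Walk.penultimate h3
  simpa using h4

/-- The first `n + 1` terms of the sequence `a` form a geodesic segment. -/
def SimpleGraph.IsGeodesicSeq (T : SimpleGraph V) (a : ℕ → V) (n : ℕ) : Prop :=
  (∀ k < n, T.Adj (a k) (a (k + 1))) ∧ ∀ k ≤ n, T.dist (a 0) (a k) = k

theorem SimpleGraph.Connected.exists_isGeodesicSeq (hT : T.Connected) (x : V) (n : ℕ) :
    ∀ y, T.dist x y = n → ∃ a, T.IsGeodesicSeq a n ∧ a 0 = x ∧ a n = y := by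
  induction n with
  | zero =>
    intro y hy
    have hxy : x = y := hT.dist_eq_zero_iff.1 hy
    exact ⟨fun _ => x, ⟨by simp, by simp⟩, rfl, hxy⟩
  | succ n ih =>
    intro y hy
    have hne : y ≠ x := by
      rintro rfl
      simp at hy
    obtain ⟨w, hw, hd⟩ := hT.exists_adj_dist_succ hne
    obtain ⟨a, ⟨ha, had⟩, ha0, han⟩ := ih w (by omega)
    refine ⟨fun k => if k ≤ n then a k else y, ⟨fun k hk => ?_, fun k hk => ?_⟩, ?_, ?_⟩
    · rcases Nat.lt_succ_iff_lt_or_eq.1 hk with h | rfl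
      · simpa [h.le, Nat.succ_le_iff.2 h] using ha k h
      · simpa [han] using hw
    · by_cases h : k ≤ n
      · simpa [h] using had k h
      · have : k = n + 1 := by omega
        subst this
        simpa [ha0] using hy
    · simpa using ha0
    · simp

theorem SimpleGraph.IsTree.isGeodesicSeq_of_ne (hT : T.IsTree) {a : ℕ → V}
    (ha : ∀ k, T.Adj (a k) (a (k + 1))) (hne : ∀ k, a k ≠ a (k + 2)) (n : ℕ) :
    T.IsGeodesicSeq a n := by
  have key : ∀ k, T.dist (a 0) (a k) = k ∧ T.dist (a 0) (a (k + 1)) = k + 1 := by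
    intro k
    induction k with
    | zero => simpa using ha 0
    | succ k ih =>
      refine ⟨ih.2, ?_⟩
      rcases hT.dist_eq_dist_add_one_of_adj (a 0) (ha (k + 1)) with h | h
      · exact absurd (hT.eq_of_adj_of_dist_succ (ha k) (by omega) (ha (k + 1)).symm h) (hne k)
      · omega
  exact ⟨fun k _ => ha k, fun k _ => (key k).1⟩

theorem SimpleGraph.IsGeodesicSeq.ne_add_two {a : ℕ → V} {n k : ℕ} (h : T.IsGeodesicSeq a n)
    (hk : k + 2 ≤ n) : a k ≠ a (k + 2) := by
  intro he
  have h1 := h.2 k (by omega)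
  have h2 := h.2 (k + 2) hk
  rw [he] at h1
  omega

theorem SimpleGraph.IsGeodesicSeq.eq_of_dist_add (hT : T.IsTree) {a : ℕ → V} {n : ℕ}
    (h : T.IsGeodesicSeq a n) (m : ℕ) :
    ∀ z, T.dist z (a n) = m → T.dist (a 0) z + T.dist z (a n) = n → z = a (n - m) := by
  induction m with
  | zero =>
    intro z hz _
    simpa using hT.connected.dist_eq_zero_iff.1 hz
  | succ m ih =>
    intro z hz hn
    have hne : z ≠ a n := by
      rintro rfl
      simp at hz
    obtain ⟨w, hw, hd⟩ := hT.connected.exists_adj_dist_succ hne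
    rw [SimpleGraph.dist_comm, SimpleGraph.dist_comm (u := a n)] at hd
    have hwm : T.dist w (a n) = m := by omega
    have htri : T.dist (a 0) (a n) ≤ T.dist (a 0) w + T.dist w (a n) := hT.connected.dist_triangle
    rw [h.2 n le_rfl] at htri
    have hstep := hT.dist_eq_dist_add_one_of_adj (a 0) hw
    have hwa := ih w hwm (by omega)
    have hk : n - m = (n - (m + 1)) + 1 := by omega
    rw [hwa] at hw hstep
    have hdk := h.2 (n - m) (by omega)
    have hdk' := h.2 (n - (m + 1)) (by omega)
    refine hT.eq_of_adj_of_dist_succ (r := a 0) (v := a (n - m)) hw.symm (by omega) ?_ (by omega)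
    rw [hk]
    exact h.1 _ (by omega)

end Trees

section Portraits

variable {V : Type*} {d : ℕ} {T : SimpleGraph V}

theorem LegalColoring.eq_of_color_eq (C : LegalColoring T d) {v w w' : V} (h : T.Adj v w)
    (h' : T.Adj v w') (hc : C.color v w = C.color v w') : w = w' :=
  (C.bij v (C.color v w')).unique ⟨h, hc⟩ ⟨h', rfl⟩

/-- A local isomorphism between trees that does not decrease the distance to a base point
is bijective. -/
theorem SimpleGraph.IsTree.bijective_and_adj_iff (hT : T.IsTree) (C : LegalColoring T d)
    (x : V) (g : V → V) (σ : V → Equiv.Perm (Fin d)) (hadj : ∀ v w, T.Adj v w → T.Adj (g v) (g w))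
    (hc : ∀ v w, T.Adj v w → C.color (g v) (g w) = σ v (C.color v w)) :
    Function.Bijective g ∧ ∀ u v, T.Adj (g u) (g v) ↔ T.Adj u v := by
  have hloc : ∀ v w w', T.Adj v w → T.Adj v w' → g w = g w' → w = w' := by
    intro v w w' h h' he
    apply C.eq_of_color_eq h h'
    apply (σ v).injective
    rw [← hc v w h, ← hc v w' h', he]
  have hlift : ∀ u y, T.Adj (g u) y → ∃ w, T.Adj u w ∧ g w = y := by
    intro u y hy
    obtain ⟨w, ⟨hw, hwc⟩, -⟩ := C.bij u ((σ u).symm (C.color (g u) y))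
    refine ⟨w, hw, C.eq_of_color_eq (hadj u w hw) hy ?_⟩
    rw [hc u w hw, hwc, Equiv.apply_symm_apply]
  have hdist : ∀ n v, T.dist x v = n → T.dist (g x) (g v) = n := by
    intro n
    induction n using Nat.strong_induction_on with
    | _ n ih =>
      intro v hv
      by_cases hvx : v = x
      · subst hvx
        simpa using hv
      obtain ⟨p, hp, hd⟩ := hT.connected.exists_adj_dist_succ hvx
      have hgp := ih (T.dist x p) (by omega) p rfl
      rcases hT.dist_eq_dist_add_one_of_adj (g x) (hadj p v hp) with h | h
      · exfalso
        have hpx : p ≠ x := by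
          rintro rfl
          simp at hgp h
        obtain ⟨q, hq, hqd⟩ := hT.connected.exists_adj_dist_succ hpx
        have hgq := ih (T.dist x q) (by omega) q rfl
        have he := hT.eq_of_adj_of_dist_succ (hadj p v hp).symm h (hadj q p hq) (by omega)
        have : v = q := hloc p v q hp hq.symm he
        subst this
        omega
      · omega
  have hinj : ∀ n u v, T.dist x u = n → g u = g v → u = v := by
    intro n
    induction n with
    | zero =>
      intro u v hu he
      have h1 := hdist _ u rfl
      have h2 := hdist _ v rfl
      rw [he] at h1
      exact (hT.connected.dist_eq_zero_iff.1 hu).symm.trans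
        (hT.connected.dist_eq_zero_iff.1 (by omega))
    | succ n ih =>
      intro u v hu he
      have h1 := hdist _ u rfl
      have h2 := hdist _ v rfl
      have hux : u ≠ x := by
        rintro rfl
        simp at hu
      have hvx : v ≠ x := by
        rintro rfl
        rw [he, SimpleGraph.dist_self] at h1
        omega
      obtain ⟨p, hp, hpd⟩ := hT.connected.exists_adj_dist_succ hux
      obtain ⟨q, hq, hqd⟩ := hT.connected.exists_adj_dist_succ hvx
      have hgp := hdist _ p rfl
      have hgq := hdist _ q rfl
      have hgqv := hadj q v hq
      rw [← he] at hgqv h2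
      have hpq : p = q := ih p q (by omega)
        (hT.eq_of_adj_of_dist_succ (r := g x) (hadj p u hp) (by omega) hgqv (by omega))
      subst hpq
      exact hloc p u v hp hq he
  have hinj' : Function.Injective g := fun u v h => hinj _ u v rfl h
  have hsurj : ∀ n y, T.dist (g x) y = n → ∃ v, g v = y := by
    intro n
    induction n with
    | zero => exact fun y hy => ⟨x, hT.connected.dist_eq_zero_iff.1 hy⟩
    | succ n ih =>
      intro y hy
      have hyx : y ≠ g x := by
        rintro rfl
        simp at hy
      obtain ⟨p, hp, hpd⟩ := hT.connected.exists_adj_dist_succ hyx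
      obtain ⟨u, rfl⟩ := ih p (by omega)
      obtain ⟨w, -, hw⟩ := hlift u y hp
      exact ⟨w, hw⟩
  refine ⟨⟨hinj', fun y => hsurj _ y rfl⟩, fun u v => ⟨fun h => ?_, hadj u v⟩⟩
  obtain ⟨w, hw, hwe⟩ := hlift u (g v) h
  exact hinj' hwe ▸ hw

/-- An automorphism of a legally colored tree is obtained by prescribing the image of the root,
the local permutation at the root and, for every other vertex, a local permutation depending on
the image color of the edge towards the root. -/
theorem exists_automorphism_of_portrait (hT : T.IsTree) (C : LegalColoring T d) (x x' : V)
    (σ₀ : Equiv.Perm (Fin d)) (s : V → Fin d → Equiv.Perm (Fin d))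
    (hs : ∀ p v, T.Adj p v → T.dist x v = T.dist x p + 1 → ∀ i, s v i (C.color p v) = i) :
    ∃ g ∈ T.autSubgroup, ∃ σ : V → Equiv.Perm (Fin d), g x = x' ∧ σ x = σ₀ ∧
      (∀ p v, T.Adj p v → T.dist x v = T.dist x p + 1 → σ v = s v (σ p (C.color p v))) ∧
      ∀ v w, T.Adj v w → C.color (g v) (g w) = σ v (C.color v w) := by
  choose nbr hnbr using fun v i => (C.bij v i).exists
  have hpar : ∀ v, ∃ p, v ≠ x → T.Adj p v ∧ T.dist x v = T.dist x p + 1 := by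
    intro v
    by_cases h : v = x
    · exact ⟨v, fun h' => absurd h h'⟩
    · obtain ⟨p, hp⟩ := hT.connected.exists_adj_dist_succ h
      exact ⟨p, fun _ => hp⟩
  choose par hpar using hpar
  let step : (V → V × Equiv.Perm (Fin d)) → V → V × Equiv.Perm (Fin d) := fun f v =>
    (nbr (f (par v)).1 ((f (par v)).2 (C.color (par v) v)),
      s v ((f (par v)).2 (C.color (par v) v)))
  let f : ℕ → V → V × Equiv.Perm (Fin d) := fun n => step^[n] (fun _ => (x', σ₀))
  let g₀ : V → V := fun v => (f (T.dist x v) v).1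
  let σ : V → Equiv.Perm (Fin d) := fun v => (f (T.dist x v) v).2
  have hchild : ∀ p v, T.Adj p v → T.dist x v = T.dist x p + 1 →
      g₀ v = nbr (g₀ p) (σ p (C.color p v)) ∧ σ v = s v (σ p (C.color p v)) := by
    intro p v hpv hd
    have hvx : v ≠ x := by
      rintro rfl
      simp at hd
    have hpp : par v = p := hT.eq_of_adj_of_dist_succ (hpar v hvx).1 (hpar v hvx).2 hpv hd
    have hf : f (T.dist x v) v = step (f (T.dist x p)) v := by
      simp only [f, hd, Function.iterate_succ_apply']
    simp only [g₀, σ, hf, step, hpp, and_self]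
  have hdown : ∀ p v, T.Adj p v → T.dist x v = T.dist x p + 1 →
      T.Adj (g₀ p) (g₀ v) ∧ C.color (g₀ p) (g₀ v) = σ p (C.color p v) := by
    intro p v hpv hd
    rw [(hchild p v hpv hd).1]
    exact hnbr _ _
  have hadj : ∀ v w, T.Adj v w → T.Adj (g₀ v) (g₀ w) := by
    intro v w h
    rcases hT.dist_eq_dist_add_one_of_adj x h with hd | hd
    · exact (hdown w v h.symm hd).1.symm
    · exact (hdown v w h hd).1
  have hc : ∀ v w, T.Adj v w → C.color (g₀ v) (g₀ w) = σ v (C.color v w) := by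
    intro v w h
    rcases hT.dist_eq_dist_add_one_of_adj x h with hd | hd
    · rw [C.symm (hadj v w h), (hdown w v h.symm hd).2, (hchild w v h.symm hd).2, C.symm h,
        hs w v h.symm hd]
    · exact (hdown v w h hd).2
  obtain ⟨hbij, hiff⟩ := hT.bijective_and_adj_iff C x g₀ σ hadj hc
  refine ⟨Equiv.ofBijective g₀ hbij, hiff, σ, ?_, ?_, fun p v h hd => (hchild p v h hd).2, hc⟩
  · simp [g₀, f]
  · simp [σ, f]

theorem exists_mem_GFFSet_of_isGeodesicSeq (hd : 3 ≤ d)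
    (F F' : Subgroup (Equiv.Perm (Fin d))) (hle : F ≤ F')
    (horb : ∀ π' ∈ F', ∀ i : Fin d, ∃ π ∈ F, π i = π' i)
    (h2t : ∀ i j k l : Fin d, i ≠ j → k ≠ l → ∃ π ∈ F', π i = k ∧ π j = l)
    (hT : T.IsTree) (C : LegalColoring T d) {a q : ℕ → V} {n : ℕ}
    (ha : T.IsGeodesicSeq a n) (hq : T.IsGeodesicSeq q n) :
    ∃ g ∈ GFFSet T C F F', ∀ k ≤ n, g (a k) = q k := by
  have htr : ∀ i j : Fin d, ∃ π ∈ F, π i = j := by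
    intro i j
    have : Nontrivial (Fin d) := Fin.nontrivial_iff_two_le.2 (by omega)
    obtain ⟨i', hi'⟩ := exists_ne i
    obtain ⟨j', hj'⟩ := exists_ne j
    obtain ⟨π', hπ', h, -⟩ := h2t i i' j j' hi'.symm hj'.symm
    obtain ⟨π, hπ, he⟩ := horb π' hπ' i
    exact ⟨π, hπ, he.trans h⟩
  have hinner : ∀ b : ℕ → V, T.IsGeodesicSeq b n → ∀ k, k + 2 ≤ n →
      C.color (b k) (b (k + 1)) ≠ C.color (b (k + 1)) (b (k + 2)) := by
    intro b hb k hk he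
    have h1 := hb.1 k (by omega)
    have h2 := hb.1 (k + 1) (by omega)
    rw [C.symm h1] at he
    exact hb.ne_add_two hk (C.eq_of_color_eq h1.symm h2 he)
  have hchoice : ∀ v i, ∃ π ∈ F', ((∀ k ≤ n, v ≠ a k) → π ∈ F) ∧
      (∀ p, T.Adj p v → T.dist (a 0) v = T.dist (a 0) p + 1 → π (C.color p v) = i) ∧
      ∀ k, k + 2 ≤ n → v = a (k + 1) → i = C.color (q k) (q (k + 1)) →
        π (C.color (a (k + 1)) (a (k + 2))) = C.color (q (k + 1)) (q (k + 2)) := by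
    intro v i
    by_cases hv : ∃ k, k + 2 ≤ n ∧ v = a (k + 1) ∧ i = C.color (q k) (q (k + 1))
    · obtain ⟨k, hk, rfl, rfl⟩ := hv
      obtain ⟨π, hπ, h1, h2⟩ := h2t _ _ _ _ (hinner a ha k hk) (hinner q hq k hk)
      have hdk := ha.2 k (by omega)
      have hdk' := ha.2 (k + 1) (by omega)
      refine ⟨π, hπ, fun h => absurd rfl (h (k + 1) (by omega)), fun p hp hpd => ?_, ?_⟩
      · rw [hT.eq_of_adj_of_dist_succ hp hpd (ha.1 k (by omega)) (by omega)]
        exact h1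
      · intro l hl he _
        have hdl := ha.2 (l + 1) (by omega)
        rw [← he, hdk'] at hdl
        obtain rfl : k = l := by omega
        exact h2
    · have hpar : ∃ π ∈ F, ∀ p, T.Adj p v → T.dist (a 0) v = T.dist (a 0) p + 1 →
          π (C.color p v) = i := by
        by_cases h : ∃ p, T.Adj p v ∧ T.dist (a 0) v = T.dist (a 0) p + 1
        · obtain ⟨p, hp, hpd⟩ := h
          obtain ⟨π, hπ, he⟩ := htr (C.color p v) i
          refine ⟨π, hπ, fun p' hp' hpd' => ?_⟩
          rw [hT.eq_of_adj_of_dist_succ hp' hpd' hp hpd]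
          exact he
        · exact ⟨1, F.one_mem, fun p hp hpd => absurd ⟨p, hp, hpd⟩ h⟩
      obtain ⟨π, hπ, he⟩ := hpar
      exact ⟨π, hle hπ, fun _ => hπ, he, fun k hk h h' => absurd ⟨k, hk, h, h'⟩ hv⟩
  choose s hsF' hsF hs hsnext using hchoice
  obtain ⟨σ₀, hσ₀, hσ₀c⟩ := htr (C.color (a 0) (a 1)) (C.color (q 0) (q 1))
  obtain ⟨g, hg, σ, hgx, hσx, hσ, hc⟩ := exists_automorphism_of_portrait hT C (a 0) (q 0) σ₀ s
    (fun p v h hpd i => hs v i p h hpd)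
  have hσs : ∀ v, v ≠ a 0 → ∃ i, σ v = s v i := by
    intro v hv
    obtain ⟨p, hp, hpd⟩ := hT.connected.exists_adj_dist_succ hv
    exact ⟨_, hσ p v hp hpd⟩
  have hstep : ∀ k, k + 1 ≤ n → g (a k) = q k →
      σ (a k) (C.color (a k) (a (k + 1))) = C.color (q k) (q (k + 1)) →
      g (a (k + 1)) = q (k + 1) := by
    intro k hk h1 h2
    have h3 := hc _ _ (ha.1 k hk)
    rw [h1, h2] at h3
    refine C.eq_of_color_eq ?_ (hq.1 k hk) h3
    rw [← h1]
    exact (hg _ _).2 (ha.1 k hk)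
  have hmain : ∀ k, k ≤ n → g (a k) = q k ∧ (k + 1 ≤ n →
      σ (a k) (C.color (a k) (a (k + 1))) = C.color (q k) (q (k + 1))) := by
    intro k
    induction k with
    | zero => exact fun _ => ⟨hgx, fun _ => by rw [hσx]; exact hσ₀c⟩
    | succ k ih =>
      intro hk
      obtain ⟨h1, h2⟩ := ih (by omega)
      refine ⟨hstep k hk h1 (h2 hk), fun hk2 => ?_⟩
      have hdk := ha.2 k (by omega)
      have hdk' := ha.2 (k + 1) (by omega)
      rw [hσ (a k) (a (k + 1)) (ha.1 k hk) (by omega), h2 hk]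
      exact hsnext _ _ k hk2 rfl rfl
  refine ⟨g, ⟨⟨hg, ?_⟩, hg, fun v => ?_⟩, fun k hk => (hmain k hk).1⟩
  · refine ((Set.finite_Iic n).image a).subset fun v hv => ?_
    by_contra hva
    have hne : ∀ k ≤ n, v ≠ a k := fun k hk he => hva ⟨k, hk, he.symm⟩
    obtain ⟨i, hi⟩ := hσs v (hne 0 (Nat.zero_le _))
    exact hv ⟨σ v, hi ▸ hsF v i hne, fun w hw => hc v w hw⟩
  · refine ⟨σ v, ?_, fun w hw => hc v w hw⟩
    by_cases hv : v = a 0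
    · rw [hv, hσx]
      exact hle hσ₀
    · obtain ⟨i, hi⟩ := hσs v hv
      exact hi ▸ hsF' v i

end Portraits

/-- If `F'` is 2-transitive (and preserves the `F`-orbits), then `G(F, F')` acts
transitively on ordered geodesic segments of every fixed length; moreover every
geodesic segment can be moved into any given geodesic line with even displacement. -/
theorem GFF_transitive_on_segments {V : Type*} (d : ℕ) (hd : 3 ≤ d)
    (F F' : Subgroup (Equiv.Perm (Fin d))) (hle : F ≤ F')
    (horb : ∀ π' ∈ F', ∀ i : Fin d, ∃ π ∈ F, π i = π' i)
    (h2t : ∀ i j k l : Fin d, i ≠ j → k ≠ l → ∃ π ∈ F', π i = k ∧ π j = l)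
    (T : SimpleGraph V) (hT : T.IsTree) (C : LegalColoring T d) :
    (∀ x y x' y' : V, T.dist x y = T.dist x' y' →
      ∃ g ∈ GFFSet T C F F', g x = x' ∧ g y = y') ∧
    (∀ L : ℤ → V, Function.Injective L → (∀ i : ℤ, T.Adj (L i) (L (i + 1))) →
      ∀ x y : V, ∃ g ∈ GFFSet T C F F',
        (∀ z : V, T.dist x z + T.dist z y = T.dist x y → g z ∈ Set.range L) ∧
        Even (T.dist x (g x))) := by
  refine ⟨fun x y x' y' hxy => ?_, fun L hL hadj x y => ?_⟩
  · obtain ⟨a, ha, ha0, han⟩ := hT.connected.exists_isGeodesicSeq x _ y rfl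
    obtain ⟨q, hq, hq0, hqn⟩ := hT.connected.exists_isGeodesicSeq x' _ y' hxy.symm
    obtain ⟨g, hg, hgk⟩ := exists_mem_GFFSet_of_isGeodesicSeq hd F F' hle horb h2t hT C ha hq
    refine ⟨g, hg, ?_, ?_⟩
    · rw [← ha0, ← hq0]
      exact hgk 0 (Nat.zero_le _)
    · rw [← han, ← hqn]
      exact hgk _ le_rfl
  · have hstart : ∃ i : ℤ, Even (T.dist x (L i)) := by
      by_cases h : Even (T.dist x (L 0))
      · exact ⟨0, h⟩
      · refine ⟨1, ?_⟩
        have h01 : T.Adj (L 0) (L 1) := hadj 0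
        have := hT.dist_eq_dist_add_one_of_adj x h01
        grind
    obtain ⟨i, hi⟩ := hstart
    obtain ⟨a, ha, ha0, han⟩ := hT.connected.exists_isGeodesicSeq x _ y rfl
    have hq : T.IsGeodesicSeq (fun k : ℕ => L (i + k)) (T.dist x y) := by
      refine hT.isGeodesicSeq_of_ne (fun k => ?_) (fun k he => ?_) _
      · simpa [add_assoc] using hadj (i + k)
      · have := hL he
        push_cast at this
        omega
    obtain ⟨g, hg, hgk⟩ := exists_mem_GFFSet_of_isGeodesicSeq hd F F' hle horb h2t hT C ha hq
    refine ⟨g, hg, fun z hz => ?_, ?_⟩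
    · rw [ha.eq_of_dist_add hT _ z rfl (by rw [ha0, han]; exact hz), hgk _ (Nat.sub_le _ _)]
      exact ⟨_, rfl⟩
    · have h0 := hgk 0 (Nat.zero_le _)
      rw [ha0] at h0
      rw [h0]
      simpa using hi
end

section
/- Let d ≥ 3, Ω = {1,…,d}, and let F ≤ F' ≤ Sym(Ω) be permutation groups such that every element of F' maps each F-orbit onto itself, and assume that F acts freely on Ω (every nontrivial element of F has no fixed point in Ω). Let T be a legally colored d-regular tree. Then every finitely generated subgroup of G(F,F') that is isomorphic to the direct product A × B of two nontrivial groups is finite. -/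
section TreeMetric

variable {V : Type*} {T : SimpleGraph V}

/-- A vertex distinct from `y` has a neighbor closer to `y`. -/
theorem SimpleGraph.Connected.exists_adj_dist_eq_succ (hT : T.Connected) {x y : V} (hxy : x ≠ y) :
    ∃ u, T.Adj x u ∧ T.dist x y = T.dist u y + 1 := by
  obtain ⟨p, hp⟩ := hT.exists_walk_length_eq_dist x y
  cases p with
  | nil => exact absurd rfl hxy
  | cons h q =>
    rename_i u
    refine ⟨u, h, ?_⟩
    have h1 := SimpleGraph.dist_le q
    have h2 := hT.dist_triangle (u := x) (v := u) (w := y)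
    have h3 := SimpleGraph.dist_eq_one_iff_adj.mpr h
    simp only [SimpleGraph.Walk.length_cons] at hp
    omega

/-- In a tree, the neighbor of a vertex closer to `y` is unique. -/
theorem SimpleGraph.IsTree.eq_of_adj_of_dist_eq_succ (hT : T.IsTree) {x y u u' : V}
    (hu : T.Adj x u) (hu' : T.Adj x u') (h : T.dist x y = T.dist u y + 1)
    (h' : T.dist x y = T.dist u' y + 1) : u = u' := by
  obtain ⟨p, hp⟩ := hT.connected.exists_walk_length_eq_dist u y
  obtain ⟨q, hq⟩ := hT.connected.exists_walk_length_eq_dist u' y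
  have h1 : (SimpleGraph.Walk.cons hu p).IsPath :=
    SimpleGraph.Walk.isPath_of_length_eq_dist _ (by simp [hp, h])
  have h2 : (SimpleGraph.Walk.cons hu' q).IsPath :=
    SimpleGraph.Walk.isPath_of_length_eq_dist _ (by simp [hq, h'])
  have h3 := (hT.existsUnique_path x y).unique h1 h2
  simpa using congrArg SimpleGraph.Walk.snd h3

/-- A geodesic in a tree whose first step leads away from `z` keeps leading away from `z`. -/
theorem SimpleGraph.IsTree.dist_eq_add_of_adj (hT : T.IsTree) {x y z u : V} (hu : T.Adj x u)
    (hy : T.dist x y = T.dist u y + 1) (hz : T.dist u z = T.dist x z + 1) :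
    T.dist y z = T.dist x y + T.dist x z := by
  induction hn : T.dist u y generalizing x u with
  | zero =>
    obtain rfl := hT.connected.dist_eq_zero_iff.mp hn
    omega
  | succ n ih =>
    obtain ⟨w, hw, hwy⟩ := hT.connected.exists_adj_dist_eq_succ (x := u) (y := y) (by
      rintro rfl; simp at hn)
    have hwz : T.dist w z = T.dist u z + 1 := by
      have h1 := hT.dist_eq_dist_add_one_of_adj z hw
      rw [SimpleGraph.dist_comm (u := z), SimpleGraph.dist_comm (u := z)] at h1
      rcases h1 with h1 | h1
      · obtain rfl := hT.eq_of_adj_of_dist_eq_succ hw hu.symm h1 hz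
        omega
      · exact h1
    have := ih hw hwy hwz (by omega)
    omega

/-- The four-point condition: trees are `0`-hyperbolic. -/
theorem SimpleGraph.IsTree.four_point (hT : T.IsTree) (x y z w : V) :
    T.dist x y + T.dist z w ≤
      max (T.dist x z + T.dist y w) (T.dist x w + T.dist y z) := by
  induction hn : T.dist x y generalizing x with
  | zero =>
    obtain rfl := hT.connected.dist_eq_zero_iff.mp hn
    have := hT.connected.dist_triangle (u := z) (v := x) (w := w)
    rw [SimpleGraph.dist_comm (u := z) (v := x)] at this
    omega
  | succ n ih =>
    obtain ⟨u, hu, huy⟩ := hT.connected.exists_adj_dist_eq_succ (x := x) (y := y) (by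
      rintro rfl; simp at hn)
    have hz := hT.dist_eq_dist_add_one_of_adj z hu
    have hw := hT.dist_eq_dist_add_one_of_adj w hu
    simp only [SimpleGraph.dist_comm (u := z), SimpleGraph.dist_comm (u := w)] at hz hw
    have hzw := hT.connected.dist_triangle (u := z) (v := x) (w := w)
    simp only [SimpleGraph.dist_comm (u := z)] at hzw ⊢
    rcases hz with hz | hz
    · rcases hw with hw | hw
      · have := ih u (by omega)
        simp only [SimpleGraph.dist_comm (u := z)] at this
        omega
      · have := hT.dist_eq_add_of_adj hu huy hw
        omega
    · have := hT.dist_eq_add_of_adj hu huy hz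
      omega

/-- If two opposite sides of a quadrilateral in a tree are short, the two other pairs have the
same total length. -/
theorem SimpleGraph.IsTree.dist_add_dist_eq (hT : T.IsTree) {p q r s : V}
    (h : T.dist p q + T.dist r s < T.dist p r + T.dist q s) :
    T.dist p r + T.dist q s = T.dist p s + T.dist q r := by
  have h1 := hT.four_point p r q s
  have h2 := hT.four_point p s q r
  simp only [SimpleGraph.dist_comm (u := s), SimpleGraph.dist_comm (u := r) (v := q)] at h1 h2
  omega

/-- A geodesic has a vertex at every intermediate distance. -/
theorem SimpleGraph.Connected.exists_dist_eq (hT : T.Connected) (x y : V) {k : ℕ}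
    (hk : k ≤ T.dist x y) : ∃ v, T.dist x v = k ∧ T.dist x y = k + T.dist v y := by
  induction k with
  | zero => exact ⟨x, by simp⟩
  | succ k ih =>
    obtain ⟨v, h1, h2⟩ := ih (by omega)
    obtain ⟨u, hu, hvu⟩ := hT.exists_adj_dist_eq_succ (x := v) (y := y) (by
      rintro rfl; simp at h2; omega)
    have h3 := hT.dist_triangle (u := x) (v := v) (w := u)
    have h4 := hT.dist_triangle (u := x) (v := u) (w := y)
    have h5 := SimpleGraph.dist_eq_one_iff_adj.mpr hu
    exact ⟨u, by omega, by omega⟩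

theorem SimpleGraph.dist_apply_of_mem_autSubgroup {g : Equiv.Perm V} (hg : g ∈ T.autSubgroup)
    (u v : V) : T.dist (g u) (g v) = T.dist u v := by
  let f : T ≃g T := ⟨g, fun {a b} => hg a b⟩
  rw [SimpleGraph.dist_eq_sInf, SimpleGraph.dist_eq_sInf]
  congr 1
  ext n
  constructor
  · rintro ⟨p, rfl⟩
    have e1 : f.symm (g u) = u := f.symm_apply_apply u
    have e2 : f.symm (g v) = v := f.symm_apply_apply v
    exact ⟨(p.map f.symm.toHom).copy e1 e2, by simp⟩
  · rintro ⟨p, rfl⟩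
    exact ⟨p.map f.toHom, by simp⟩

end TreeMetric

section LengthFunction

variable {V : Type*} {T : SimpleGraph V}

/-- If `g`, `h` and `g * h` are elliptic then the displacement of `g * h` at `x` is bounded by
those of `g` and `h`. -/
theorem dist_mul_le_max (hT : T.IsTree) {g h : Equiv.Perm V} (hg : g ∈ T.autSubgroup)
    (hh : h ∈ T.autSubgroup) (x : V) (h1 : T.dist x (g (g x)) ≤ T.dist x (g x))
    (h2 : T.dist x (h (h x)) ≤ T.dist x (h x))
    (h3 : T.dist x (g (h (g (h x)))) ≤ T.dist x (g (h x))) :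
    T.dist x (g (h x)) ≤ max (T.dist x (g x)) (T.dist x (h x)) := by
  have dg := SimpleGraph.dist_apply_of_mem_autSubgroup hg
  have dh := SimpleGraph.dist_apply_of_mem_autSubgroup hh
  obtain ⟨p1, e1⟩ := g.surjective x
  obtain ⟨p4, e4⟩ := h.surjective x
  obtain ⟨p6, e6⟩ := h.surjective p1
  have a1 : T.dist x p1 = T.dist x (g x) := by
    rw [← dg, e1, SimpleGraph.dist_comm]
  have b1 : T.dist x p4 = T.dist x (h x) := by
    rw [← dh, e4, SimpleGraph.dist_comm]
  have c1 : T.dist x p6 = T.dist x (g (h x)) := by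
    rw [← dh, ← dg, e6, e1, SimpleGraph.dist_comm]
  have c2 : T.dist p1 (h x) = T.dist x (g (h x)) := by rw [← dg, e1]
  have a2 : T.dist p1 (g x) = T.dist x (g (g x)) := by rw [← dg, e1]
  have b2 : T.dist p4 (h x) = T.dist x (h (h x)) := by rw [← dh, e4]
  have b3 : T.dist (g x) (g (h x)) = T.dist x (h x) := dg _ _
  have a3 : T.dist p4 p6 = T.dist x (g x) := by rw [← dh, e4, e6, a1]
  have c3 : T.dist p6 (g (h x)) = T.dist x (g (h (g (h x)))) := by rw [← dh, ← dg, e6, e1]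
  have f1 := hT.four_point x (g x) p1 (h x)
  have f2 := hT.four_point x p4 (g x) (h x)
  have f3 := hT.four_point x (g (h x)) (g x) p4
  have f4 := hT.four_point x p6 (g (h x)) p4
  rw [SimpleGraph.dist_comm (u := g x) (v := p1)] at f1
  rw [SimpleGraph.dist_comm (u := p4) (v := g x)] at f2
  rw [SimpleGraph.dist_comm (u := g (h x)) (v := g x)] at f3
  rw [SimpleGraph.dist_comm (u := p6) (v := p4)] at f4
  omega

/-- The displacement of the powers of a hyperbolic element grows. -/
theorem le_dist_pow (hT : T.IsTree) {h : Equiv.Perm V} (hh : h ∈ T.autSubgroup) (x : V)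
    (h1 : T.dist x (h x) < T.dist x (h (h x))) (n : ℕ) : n ≤ T.dist x ((h ^ n) x) := by
  have dh := SimpleGraph.dist_apply_of_mem_autSubgroup hh
  have key : ∀ n : ℕ, T.dist x ((h ^ n) x) < T.dist x ((h ^ (n + 1)) x) := by
    intro n
    induction n with
    | zero =>
      simp only [pow_zero, Equiv.Perm.coe_one, id_eq, SimpleGraph.dist_self, zero_add, pow_one]
      rcases Nat.eq_zero_or_pos (T.dist x (h x)) with h0 | h0
      · have := hT.connected.dist_eq_zero_iff.mp h0
        rw [← this, ← this] at h1
        simp at h1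
      · exact h0
    | succ n ih =>
      have f := hT.four_point x (h (h x)) (h x) ((h ^ (n + 1 + 1)) x)
      have e1 : (h ^ (n + 1 + 1)) x = h ((h ^ (n + 1)) x) := by
        rw [pow_succ' h (n + 1), Equiv.Perm.mul_apply]
      have e2 : (h ^ (n + 1)) x = h ((h ^ n) x) := by rw [pow_succ' h n, Equiv.Perm.mul_apply]
      have e3 : T.dist (h (h x)) (h ((h ^ (n + 1)) x)) = T.dist x ((h ^ n) x) := by
        rw [dh, e2, dh]
      rw [e1, e3, dh x, dh (h x) x, SimpleGraph.dist_comm (u := h x)] at f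
      rw [e1]
      omega
  induction n with
  | zero => simp
  | succ n ih => have := key n; omega

end LengthFunction

section Shift

variable {V : Type*} {T : SimpleGraph V}

/-- Elements commuting with a hyperbolic `h` shift the distances to the points `h ^ n x`
additively. -/
theorem dist_mul_pow_add_dist (hT : T.IsTree) {h c c' : Equiv.Perm V} (hh : h ∈ T.autSubgroup)
    (hc : c ∈ T.autSubgroup) (x : V) (hcomm : Commute c' h) {n : ℕ}
    (hn : T.dist x (c x) + T.dist x (c' x) < T.dist x ((h ^ n) x)) :
    T.dist x (c (c' ((h ^ n) x))) + T.dist x ((h ^ n) x) =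
      T.dist x (c ((h ^ n) x)) + T.dist x (c' ((h ^ n) x)) := by
  have dc := SimpleGraph.dist_apply_of_mem_autSubgroup hc
  have dhn := SimpleGraph.dist_apply_of_mem_autSubgroup (T.autSubgroup.pow_mem hh n)
  obtain ⟨p, hp⟩ := c.surjective x
  have e1 : T.dist p x = T.dist x (c x) := by rw [← dc, hp]
  have e2 : T.dist (c' ((h ^ n) x)) ((h ^ n) x) = T.dist x (c' x) := by
    rw [← Equiv.Perm.mul_apply, (hcomm.pow_right n).eq, Equiv.Perm.mul_apply, dhn,
      SimpleGraph.dist_comm]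
  have e3 : ∀ y, T.dist p y = T.dist x (c y) := fun y => by rw [← dc, hp]
  have := hT.dist_add_dist_eq (p := p) (q := x) (r := c' ((h ^ n) x)) (s := (h ^ n) x)
    (by omega)
  rwa [e3, e3] at this

/-- The distances from `x` to `c (h ^ n x)` and to `h ^ n x` eventually differ by a constant. -/
theorem exists_shift (hT : T.IsTree) {h c : Equiv.Perm V} (hh : h ∈ T.autSubgroup)
    (hc : c ∈ T.autSubgroup) (x : V) (hgrow : ∀ n : ℕ, n ≤ T.dist x ((h ^ n) x)) :
    ∃ s : ℤ, ∀ᶠ n : ℕ in Filter.atTop,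
      (T.dist x (c ((h ^ n) x)) : ℤ) = T.dist x ((h ^ n) x) + s := by
  let N := T.dist x (c x) + T.dist x (h x) + 1
  refine ⟨(T.dist x (c ((h ^ N) x)) : ℤ) - T.dist x ((h ^ N) x), ?_⟩
  filter_upwards [Filter.eventually_ge_atTop N] with n hn
  induction n, hn using Nat.le_induction with
  | base => ring
  | succ n hn ih =>
    have h1 := hgrow n
    have h2 := dist_mul_pow_add_dist hT hh hc x (Commute.refl h) (n := n) (by omega)
    have h3 : h ((h ^ n) x) = (h ^ (n + 1)) x := by rw [pow_succ', Equiv.Perm.mul_apply]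
    rw [h3] at h2
    omega

/-- An automorphism commuting with a hyperbolic `h` and with zero shift fixes a vertex. -/
theorem exists_fixed_of_shift_eq_zero (hT : T.IsTree) {h c : Equiv.Perm V}
    (hh : h ∈ T.autSubgroup) (hc : c ∈ T.autSubgroup) (x : V) (hcomm : Commute c h) {n : ℕ}
    (hn : 2 * T.dist x (c x) < T.dist x ((h ^ n) x))
    (hs : T.dist x (c ((h ^ n) x)) = T.dist x ((h ^ n) x)) : ∃ y, c y = y := by
  have dc := SimpleGraph.dist_apply_of_mem_autSubgroup hc
  have dhn := SimpleGraph.dist_apply_of_mem_autSubgroup (T.autSubgroup.pow_mem hh n)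
  set z := (h ^ n) x with hz
  have e2 : T.dist z (c z) = T.dist x (c x) := by
    rw [hz, ← Equiv.Perm.mul_apply, (hcomm.pow_right n).eq, Equiv.Perm.mul_apply, dhn]
  have hs' : T.dist (c x) z = T.dist x z := by
    have := hT.dist_add_dist_eq (p := x) (q := c x) (r := z) (s := c z) (by
      have := dc x z; omega)
    have := dc x z
    omega
  obtain ⟨y, hy1, hy2⟩ := hT.connected.exists_dist_eq x z (k := T.dist x (c x)) (by omega)
  refine ⟨y, ?_⟩
  have f1 := hT.four_point y (c z) x z
  have f2 := hT.four_point y (c x) x z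
  have f3 := hT.four_point y (c y) (c x) (c z)
  have d1 := dc x y
  have d2 := dc y z
  have d3 := dc x z
  rw [SimpleGraph.dist_comm (u := y) (v := x), SimpleGraph.dist_comm (u := c z) (v := z),
    SimpleGraph.dist_comm (u := c z) (v := x)] at f1
  rw [SimpleGraph.dist_comm (u := y) (v := x), SimpleGraph.dist_comm (u := c x) (v := x)] at f2
  rw [SimpleGraph.dist_comm (u := c y) (v := c x)] at f3
  exact (hT.connected.dist_eq_zero_iff.mp (by omega)).symm

end Shift

section LocalAction

variable {V : Type*} {d : ℕ} {T : SimpleGraph V} {C : LegalColoring T d}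
  {F : Subgroup (Equiv.Perm (Fin d))}

theorem LegalColoring.finite_neighborSet (C : LegalColoring T d) (v : V) :
    (T.neighborSet v).Finite :=
  Set.Finite.of_finite_image (f := C.color v) (Set.toFinite _) fun _ hw w' hw' hww' =>
    (C.bij v (C.color v w')).unique ⟨hw, hww'⟩ ⟨hw', rfl⟩

theorem LegalColoring.finite_setOf_dist_le (C : LegalColoring T d) (hT : T.Connected) (x : V)
    (n : ℕ) : {v | T.dist x v ≤ n}.Finite := by
  induction n with
  | zero =>
    refine (Set.finite_singleton x).subset fun v hv => ?_
    exact (hT.dist_eq_zero_iff.mp (Nat.le_zero.mp hv)).symm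
  | succ n ih =>
    refine (ih.union (ih.biUnion fun v _ => C.finite_neighborSet v)).subset fun v hv => ?_
    by_cases hvx : v = x
    · left; simp [hvx]
    · obtain ⟨u, hu, h⟩ := hT.exists_adj_dist_eq_succ hvx
      simp only [Set.mem_ofPred_eq] at hv
      rw [SimpleGraph.dist_comm (u := v), SimpleGraph.dist_comm (u := u)] at h
      exact Or.inr (Set.mem_biUnion (x := u) (by simp only [Set.mem_ofPred_eq]; omega) hu.symm)

theorem LocalIn.one (v : V) : LocalIn T C F 1 v := ⟨1, F.one_mem, fun _ _ => rfl⟩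

theorem LocalIn.mul {g h : Equiv.Perm V} (hh : h ∈ T.autSubgroup) {v : V}
    (hg : LocalIn T C F g (h v)) (hv : LocalIn T C F h v) : LocalIn T C F (g * h) v := by
  obtain ⟨π, hπ, h1⟩ := hg
  obtain ⟨ρ, hρ, h2⟩ := hv
  refine ⟨π * ρ, F.mul_mem hπ hρ, fun w hw => ?_⟩
  rw [Equiv.Perm.mul_apply, Equiv.Perm.mul_apply, h1 ((hh v w).mpr hw), h2 hw,
    Equiv.Perm.mul_apply]

theorem LocalIn.inv {g : Equiv.Perm V} (hg : g ∈ T.autSubgroup) {v : V}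
    (h : LocalIn T C F g (g⁻¹ v)) : LocalIn T C F g⁻¹ v := by
  obtain ⟨π, hπ, h1⟩ := h
  refine ⟨π⁻¹, F.inv_mem hπ, fun w hw => ?_⟩
  have := h1 ((T.autSubgroup.inv_mem hg v w).mpr hw)
  simp only [Equiv.Perm.inv_def, Equiv.apply_symm_apply] at this
  rw [Equiv.Perm.inv_def, Equiv.Perm.inv_def, this, Equiv.symm_apply_apply]

/-- When `F` acts freely, an automorphism acting locally like `F` at a fixed vertex and fixing
one neighbor fixes all neighbors. -/
theorem LocalIn.apply_eq_of_adj (hfree : ∀ π ∈ F, π ≠ 1 → ∀ i : Fin d, π i ≠ i)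
    {c : Equiv.Perm V} (hc : c ∈ T.autSubgroup) {u w v : V} (hl : LocalIn T C F c u)
    (hu : c u = u) (huw : T.Adj u w) (hw : c w = w) (huv : T.Adj u v) : c v = v := by
  obtain ⟨π, hπ, h1⟩ := hl
  have hπ1 : π = 1 := by
    by_contra hne
    refine hfree π hπ hne (C.color u w) ?_
    rw [← h1 huw, hu, hw]
  have h2 := h1 huv
  have h3 := (hc u v).mpr huv
  rw [hu] at h2 h3
  exact (C.bij u (C.color u v)).unique ⟨h3, by rw [h2, hπ1, Equiv.Perm.one_apply]⟩ ⟨huv, rfl⟩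

/-- When `F` acts freely, a nontrivial element of `G(F)` commuting with a hyperbolic element has
no fixed vertex. -/
theorem eq_one_of_commute_of_apply_eq (hfree : ∀ π ∈ F, π ≠ 1 → ∀ i : Fin d, π i ≠ i)
    (hT : T.IsTree) {h c : Equiv.Perm V} (hh : h ∈ T.autSubgroup) (hc : c ∈ GSet T C F)
    (hcomm : Commute c h) {x : V} (hgrow : ∀ n : ℕ, n ≤ T.dist x ((h ^ n) x)) {y : V}
    (hy : c y = y) : c = 1 := by
  obtain ⟨hc, hfin⟩ := hc
  have dc := SimpleGraph.dist_apply_of_mem_autSubgroup hc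
  obtain ⟨M, hM⟩ := (hfin.image (T.dist y)).bddAbove
  replace hM : ∀ v, M < T.dist y v → LocalIn T C F c v := fun v hv => by
    by_contra hl
    have := hM (Set.mem_image_of_mem (T.dist y) hl)
    omega
  ext w
  obtain ⟨n, hn⟩ : ∃ n, n = M + T.dist y w + 2 * T.dist x y + 1 := ⟨_, rfl⟩
  have dhn := SimpleGraph.dist_apply_of_mem_autSubgroup (T.autSubgroup.pow_mem hh n)
  have hcn : ∀ v, c ((h ^ n) v) = (h ^ n) (c v) := fun v => by
    rw [← Equiv.Perm.mul_apply, (hcomm.pow_right n).eq, Equiv.Perm.mul_apply]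
  obtain ⟨z, hz⟩ : ∃ z, z = (h ^ n) y := ⟨_, rfl⟩
  have hcz : c z = z := by rw [hz, hcn, hy]
  have hyz : M + T.dist y w < T.dist y z := by
    have h1 := hgrow n
    have h2 := hT.connected.dist_triangle (u := x) (v := y) (w := (h ^ n) x)
    have h3 := hT.connected.dist_triangle (u := y) (v := z) (w := (h ^ n) x)
    have h4 : T.dist z ((h ^ n) x) = T.dist x y := by rw [hz, dhn, SimpleGraph.dist_comm]
    omega
  have hprop : ∀ k ≤ T.dist y w, ∀ v, T.dist z v = k →
      c v = v ∧ ∃ u, T.Adj v u ∧ c u = u := by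
    intro k
    induction k with
    | zero =>
      intro _ v hv
      obtain rfl := hT.connected.dist_eq_zero_iff.mp hv
      obtain ⟨u, hu, huy⟩ := hT.connected.exists_adj_dist_eq_succ (x := z) (y := y) (by
        rintro rfl; simp at hyz)
      refine ⟨hcz, u, hu, ?_⟩
      have h1 := (hc z u).mpr hu
      rw [hcz] at h1
      have h2 := dc u y
      rw [hy] at h2
      exact hT.eq_of_adj_of_dist_eq_succ h1 hu (by omega) huy
    | succ k ih =>
      intro hk v hv
      obtain ⟨u, hu, huz⟩ := hT.connected.exists_adj_dist_eq_succ (x := v) (y := z) (by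
        rintro rfl; simp at hv)
      rw [SimpleGraph.dist_comm (u := v), SimpleGraph.dist_comm (u := u)] at huz
      obtain ⟨h1, t, ht, hct⟩ := ih (by omega) u (by omega)
      have h2 := hT.connected.dist_triangle (u := y) (v := u) (w := z)
      rw [SimpleGraph.dist_comm (u := u)] at h2
      exact ⟨(hM u (by omega)).apply_eq_of_adj hfree hc h1 ht hct hu.symm, u, hu, h1⟩
  have hw := (hprop (T.dist y w) le_rfl ((h ^ n) w) (by rw [hz, dhn])).1
  rw [hcn] at hw
  exact (h ^ n).injective hw

/-- When `F` acts freely, the centralizer of a hyperbolic element in a subgroup of `G(F)` embeds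
into `ℤ`. -/
theorem exists_injective_centralizer (hfree : ∀ π ∈ F, π ≠ 1 → ∀ i : Fin d, π i ≠ i)
    (hT : T.IsTree) {H : Subgroup (Equiv.Perm V)} (hH : (H : Set (Equiv.Perm V)) ⊆ GSet T C F)
    (h : H) {x : V} (hgrow : ∀ n : ℕ, n ≤ T.dist x (((h : Equiv.Perm V) ^ n) x)) :
    ∃ f : Subgroup.centralizer {h} →* Multiplicative ℤ, Function.Injective f := by
  have hA : ∀ c : H, (c : Equiv.Perm V) ∈ T.autSubgroup := fun c => (hH c.2).1
  have hcomm : ∀ c : Subgroup.centralizer {h}, Commute (c : Equiv.Perm V) (h : Equiv.Perm V) :=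
    fun c => congrArg Subtype.val (Subgroup.mem_centralizer_singleton_iff.mp c.2)
  choose s hs using fun c : Subgroup.centralizer {h} =>
    exists_shift hT (hA h) (hA c) x hgrow
  have hlarge : ∀ K : ℕ, ∀ᶠ n : ℕ in Filter.atTop,
      K < T.dist x (((h : Equiv.Perm V) ^ n) x) := fun K => by
    filter_upwards [Filter.eventually_gt_atTop K] with n hn
    exact hn.trans_le (hgrow n)
  have hmul : ∀ c c', s (c * c') = s c + s c' := fun c c' => by
    obtain ⟨n, h1, h2, h3, h4⟩ := ((hs c).and ((hs c').and ((hs (c * c')).and (hlarge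
      (T.dist x ((c : Equiv.Perm V) x) + T.dist x ((c' : Equiv.Perm V) x)))))).exists
    have := dist_mul_pow_add_dist hT (hA h) (hA c) x (hcomm c') h4
    simp only [Subgroup.coe_mul, Equiv.Perm.mul_apply] at h3
    omega
  refine ⟨MonoidHom.mk' (fun c => Multiplicative.ofAdd (s c)) fun c c' => by
    rw [hmul, ofAdd_add], (injective_iff_map_eq_one _).mpr fun c hc => ?_⟩
  have hc0 : s c = 0 := hc
  obtain ⟨n, h1, h2⟩ := ((hs c).and (hlarge (2 * T.dist x ((c : Equiv.Perm V) x)))).exists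
  obtain ⟨y, hy⟩ := exists_fixed_of_shift_eq_zero hT (hA h) (hA c) x (hcomm c) h2 (by omega)
  exact Subtype.ext (Subtype.ext
    (eq_one_of_commute_of_apply_eq hfree hT (hA h) (hH c.1.2) (hcomm c) hgrow hy))

/-- When `F` acts freely, a finitely generated subgroup of `G(F)` with a bounded orbit is
finite. -/
theorem finite_of_dist_le (hfree : ∀ π ∈ F, π ≠ 1 → ∀ i : Fin d, π i ≠ i)
    (hT : T.IsTree) {H : Subgroup (Equiv.Perm V)} (hH : (H : Set (Equiv.Perm V)) ⊆ GSet T C F)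
    (hfg : H.FG) {x : V} {R : ℕ} (hR : ∀ h ∈ H, T.dist x (h x) ≤ R) : Finite H := by
  have hA : ∀ c ∈ H, c ∈ T.autSubgroup := fun c hc => (hH hc).1
  have hD : ∀ c ∈ H, ∀ u v, T.dist (c u) (c v) = T.dist u v := fun c hc =>
    SimpleGraph.dist_apply_of_mem_autSubgroup (hA c hc)
  obtain ⟨S, hS⟩ := hfg
  have hSH : ∀ g ∈ S, g ∈ H := fun g hg => hS ▸ Subgroup.subset_closure hg
  have hfin : (⋃ g ∈ S, {v | ¬ LocalIn T C F g v}).Finite :=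
    S.finite_toSet.biUnion fun g hg => (hH (hSH g hg)).2
  obtain ⟨M, hM⟩ := (hfin.image (T.dist x)).bddAbove
  have hgen : ∀ g ∈ S, ∀ v, M < T.dist x v → LocalIn T C F g v := fun g hg v hv => by
    by_contra hl
    have := hM (Set.mem_image_of_mem (T.dist x) (Set.mem_biUnion hg hl))
    omega
  have hloc : ∀ g ∈ H, ∀ v, (∀ k ∈ H, M < T.dist x (k v)) → LocalIn T C F g v := by
    intro g hg
    have hg' := hg
    rw [← hS] at hg'
    induction hg' using Subgroup.closure_induction with
    | mem g hgS => exact fun v hv => hgen g hgS v (by simpa using hv 1 H.one_mem)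
    | one => exact fun v _ => LocalIn.one v
    | mul a b ha hb iha ihb =>
      rw [hS] at ha hb
      exact fun v hv => LocalIn.mul (hA b hb)
        (iha ha _ fun k hk => hv (k * b) (H.mul_mem hk hb)) (ihb hb v hv)
    | inv a ha iha =>
      rw [hS] at ha
      exact fun v hv => LocalIn.inv (hA a ha)
        (iha ha _ fun k hk => hv (k * a⁻¹) (H.mul_mem hk (H.inv_mem ha)))
  have hloc' : ∀ g ∈ H, ∀ v, M + R < T.dist x v → LocalIn T C F g v := fun g hg v hv =>
    hloc g hg v fun k hk => by
      have h1 := hD k hk x v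
      have h2 := hT.connected.dist_triangle (u := k x) (v := x) (w := k v)
      have h3 := hR k hk
      rw [SimpleGraph.dist_comm (u := k x) (v := x)] at h2
      omega
  have htriv : ∀ g ∈ H, (∀ v, T.dist x v ≤ M + R + 1 → g v = v) → g = 1 := by
    intro g hg hfix
    have : ∀ k, ∀ v, T.dist x v = k → g v = v := by
      intro k
      induction k using Nat.strong_induction_on with
      | _ k ih =>
        intro v hv
        by_cases hk : k ≤ M + R + 1
        · exact hfix v (by omega)
        obtain ⟨u, hu, hux⟩ := hT.connected.exists_adj_dist_eq_succ (x := v) (y := x) (by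
          rintro rfl; simp at hv; omega)
        rw [SimpleGraph.dist_comm (u := v), SimpleGraph.dist_comm (u := u)] at hux
        obtain ⟨t, ht, htx⟩ := hT.connected.exists_adj_dist_eq_succ (x := u) (y := x) (by
          rintro rfl; rw [SimpleGraph.dist_self] at hux; omega)
        rw [SimpleGraph.dist_comm (u := u), SimpleGraph.dist_comm (u := t)] at htx
        exact (hloc' g hg u (by omega)).apply_eq_of_adj hfree (hA g hg)
          (ih _ (by omega) u rfl) ht (ih _ (by omega) t rfl) hu.symm
    exact Equiv.ext fun v => this _ v rfl
  have hB := C.finite_setOf_dist_le hT.connected x (M + R + 1)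
  have hB' := C.finite_setOf_dist_le hT.connected x (R + (M + R + 1))
  have := hB.to_subtype
  have := hB'.to_subtype
  let φ : H → {v | T.dist x v ≤ M + R + 1} → {v | T.dist x v ≤ R + (M + R + 1)} :=
    fun g v => ⟨g.1 v.1, by
      have h1 := hD g.1 g.2 x v
      have h2 := hT.connected.dist_triangle (u := x) (v := g.1 x) (w := g.1 v)
      have h3 := hR g.1 g.2
      have h4 : T.dist x v.1 ≤ M + R + 1 := v.2
      simp only [Set.mem_ofPred_eq]
      omega⟩
  refine Finite.of_injective φ fun g g' hgg' => ?_
  have := htriv _ (H.mul_mem (H.inv_mem g'.2) g.2) fun v hv => by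
    have h1 : g.1 v = g'.1 v := congrArg Subtype.val (congrFun hgg' ⟨v, hv⟩)
    rw [Equiv.Perm.mul_apply, h1, Equiv.Perm.inv_def, Equiv.symm_apply_apply]
  exact Subtype.ext (inv_mul_eq_one.mp this).symm

/-- When `F` acts freely, an infinite finitely generated subgroup of `G(F)` has a hyperbolic
element. -/
theorem exists_hyperbolic_of_infinite (hfree : ∀ π ∈ F, π ≠ 1 → ∀ i : Fin d, π i ≠ i)
    (hT : T.IsTree) {H : Subgroup (Equiv.Perm V)} (hH : (H : Set (Equiv.Perm V)) ⊆ GSet T C F)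
    (hfg : H.FG) (hinf : Infinite H) (x : V) :
    ∃ h ∈ H, T.dist x (h x) < T.dist x (h (h x)) := by
  by_contra! hell
  have hA : ∀ c ∈ H, c ∈ T.autSubgroup := fun c hc => (hH hc).1
  refine not_finite_iff_infinite.mpr hinf ?_
  obtain ⟨S, hS⟩ := id hfg
  obtain ⟨R, hR⟩ := (S.finite_toSet.image fun g => T.dist x (g x)).bddAbove
  refine finite_of_dist_le hfree hT hH hfg (x := x) (R := R) fun h hh => ?_
  have hh' := hh
  rw [← hS] at hh'
  induction hh' using Subgroup.closure_induction with
  | mem g hg => exact hR (Set.mem_image_of_mem (fun g : Equiv.Perm V => T.dist x (g x)) hg)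
  | one => simp
  | mul a b ha hb iha ihb =>
    rw [hS] at ha hb
    exact (dist_mul_le_max hT (hA a ha) (hA b hb) x (hell a ha) (hell b hb)
      (hell _ (H.mul_mem ha hb))).trans (max_le (iha ha) (ihb hb))
  | inv a ha iha =>
    rw [hS] at ha
    rw [← SimpleGraph.dist_apply_of_mem_autSubgroup (hA a ha), Equiv.Perm.inv_def, Equiv.apply_symm_apply,
      SimpleGraph.dist_comm]
    exact iha ha

end LocalAction

/-- Nontrivial elements of a group embedding into `ℤ` are commensurable. -/
theorem exists_zpow_eq_zpow_ne_one {K : Type*} [Group K] {f : K →* Multiplicative ℤ}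
    (hf : Function.Injective f) {a b : K} (ha : a ≠ 1) (hb : b ≠ 1) :
    ∃ m n : ℤ, a ^ m = b ^ n ∧ a ^ m ≠ 1 := by
  have ha' : (f a).toAdd ≠ 0 := fun h => ha (hf (by rw [map_one]; exact h))
  have hb' : (f b).toAdd ≠ 0 := fun h => hb (hf (by rw [map_one]; exact h))
  refine ⟨(f b).toAdd, (f a).toAdd, hf ?_, fun h => ?_⟩
  · rw [map_zpow, map_zpow]
    apply Multiplicative.toAdd.injective
    simp [mul_comm]
  · have := congrArg (fun k => (f k).toAdd) h
    simp [ha', hb'] at this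

/-- Every element of a nontrivial group commutes with a nontrivial element. -/
theorem exists_commute_ne_one {A : Type*} [Group A] [Nontrivial A] (a : A) :
    ∃ a' : A, a' ≠ 1 ∧ Commute a' a := by
  by_cases h : a = 1
  · obtain ⟨a', ha'⟩ := exists_ne (1 : A)
    exact ⟨a', ha', h ▸ Commute.one_right a'⟩
  · exact ⟨a, h, Commute.refl a⟩

/-- If `F` acts freely on `Ω`, then every finitely generated subgroup of `G(F, F')`
which is isomorphic to a direct product of two nontrivial groups is finite. -/
theorem GFF_fg_direct_product_finite {V : Type*} (d : ℕ) (hd : 3 ≤ d)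
    (F F' : Subgroup (Equiv.Perm (Fin d))) (hle : F ≤ F')
    (horb : ∀ π' ∈ F', ∀ i : Fin d, ∃ π ∈ F, π i = π' i)
    (hfree : ∀ π ∈ F, π ≠ 1 → ∀ i : Fin d, π i ≠ i)
    (T : SimpleGraph V) (hT : T.IsTree) (C : LegalColoring T d)
    (H : Subgroup (Equiv.Perm V)) (hH : (H : Set (Equiv.Perm V)) ⊆ GFFSet T C F F')
    (hfg : H.FG)
    (A B : Type*) [Group A] [Group B] [Nontrivial A] [Nontrivial B]
    (e : H ≃* A × B) : Finite H := by
  by_contra hinf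
  rw [not_finite_iff_infinite] at hinf
  obtain ⟨x⟩ := hT.connected.nonempty
  have hHG : (H : Set (Equiv.Perm V)) ⊆ GSet T C F := hH.trans Set.inter_subset_left
  obtain ⟨h, hh, hhyp⟩ := exists_hyperbolic_of_infinite hfree hT hHG hfg hinf x
  obtain ⟨f, hf⟩ := exists_injective_centralizer hfree hT hHG ⟨h, hh⟩
    (le_dist_pow hT (hHG hh).1 x hhyp)
  obtain ⟨a, ha, hac⟩ := exists_commute_ne_one (e ⟨h, hh⟩).1
  obtain ⟨b, hb, hbc⟩ := exists_commute_ne_one (e ⟨h, hh⟩).2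
  let a' : Subgroup.centralizer {(⟨h, hh⟩ : H)} := ⟨e.symm (a, 1),
    Subgroup.mem_centralizer_singleton_iff.mpr (e.injective (by
      rw [map_mul, map_mul, e.apply_symm_apply]
      exact Prod.ext hac (by simp)))⟩
  let b' : Subgroup.centralizer {(⟨h, hh⟩ : H)} := ⟨e.symm (1, b),
    Subgroup.mem_centralizer_singleton_iff.mpr (e.injective (by
      rw [map_mul, map_mul, e.apply_symm_apply]
      exact Prod.ext (by simp) hbc))⟩
  have ea : e a' = (a, 1) := e.apply_symm_apply _
  have eb : e b' = (1, b) := e.apply_symm_apply _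
  obtain ⟨m, n, hmn, hne⟩ := exists_zpow_eq_zpow_ne_one hf (a := a') (b := b')
    (fun h1 => ha (by rw [h1] at ea; simpa using (congrArg Prod.fst ea).symm))
    (fun h1 => hb (by rw [h1] at eb; simpa using (congrArg Prod.snd eb).symm))
  have h1 : (a, (1 : B)) ^ m = ((1 : A), b) ^ n := by
    have := congrArg (fun k : Subgroup.centralizer {(⟨h, hh⟩ : H)} => e k) hmn
    simpa only [Subgroup.coe_zpow, map_zpow, ea, eb] using this
  have h2 : a ^ m = 1 := by simpa using congrArg Prod.fst h1
  refine hne (Subtype.ext (e.injective ?_))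
  rw [Subgroup.coe_zpow, map_zpow, ea]
  exact Prod.ext (by simpa using h2) (by simp)
end

section
/- Let d ≥ 3, Ω = {1,…,d}, and let F ≤ F' ≤ Sym(Ω) be permutation groups such that every element of F' maps each F-orbit onto itself, and assume that F' does NOT act 2-transitively on Ω. Let T be a legally colored d-regular tree. Then the quotient of the real vector space of homogeneous quasimorphisms of the group G(F,F') by the subspace of group homomorphisms G(F,F') → ℝ is infinite-dimensional; equivalently, there exists an infinite family (φ_k) of homogeneous quasimorphisms G(F,F') → ℝ such that no nontrivial finite real linear combination of the φ_k is a group homomorphism. -/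
namespace List

/-! ### Counting occurrences of a pattern in a list of Booleans -/

/-- The number of positions at which the list `w` occurs in `S` as a contiguous sublist. -/
def occurrences (w S : List Bool) : ℕ :=
  S.tails.countP fun s => decide (w <+: s)

theorem occurrences_nil {w : List Bool} (hw : w ≠ []) : occurrences w [] = 0 := by
  simp [occurrences, hw]

theorem occurrences_cons (w : List Bool) (a : Bool) (S : List Bool) :
    occurrences w (a :: S) = occurrences w S + if w <+: a :: S then 1 else 0 := by
  simp [occurrences, List.countP_cons]

theorem occurrences_append_ge (w S₁ S₂ : List Bool) (hw : w ≠ []) :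
    occurrences w S₁ + occurrences w S₂ ≤ occurrences w (S₁ ++ S₂) := by
  induction S₁ with
  | nil => simp [occurrences_nil hw]
  | cons a S₁ ih =>
    rw [List.cons_append, occurrences_cons, occurrences_cons]
    by_cases h : w <+: a :: S₁
    · have h' : w <+: a :: (S₁ ++ S₂) := h.trans (List.prefix_append (a :: S₁) S₂)
      rw [if_pos h, if_pos h']
      omega
    · rw [if_neg h]
      omega

theorem occurrences_append_le (w S₁ S₂ : List Bool) (hw : w ≠ []) :
    occurrences w (S₁ ++ S₂) ≤
      occurrences w S₁ + occurrences w S₂ + min S₁.length w.length := by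
  induction S₁ with
  | nil => simp [occurrences_nil hw]
  | cons a S₁ ih =>
    rw [List.cons_append, occurrences_cons, occurrences_cons, List.length_cons]
    by_cases hl : w.length ≤ S₁.length + 1
    · by_cases h : w <+: a :: (S₁ ++ S₂)
      · have h' : w <+: a :: S₁ :=
          List.prefix_of_prefix_length_le h (List.prefix_append (a :: S₁) S₂) (by simpa using hl)
        rw [if_pos h, if_pos h']
        omega
      · rw [if_neg h]
        omega
    · split_ifs <;> omega

theorem occurrences_le_length (w S : List Bool) (hw : w ≠ []) :
    occurrences w S ≤ S.length := by
  induction S with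
  | nil => simp [occurrences_nil hw]
  | cons a S ih =>
    rw [occurrences_cons, List.length_cons]
    split_ifs <;> omega

theorem occurrences_eq_zero {w S : List Bool} (hw : w ≠ []) (h : ¬ w <:+: S) :
    occurrences w S = 0 := by
  induction S with
  | nil => exact occurrences_nil hw
  | cons a S ih =>
    rw [List.infix_cons_iff, not_or] at h
    rw [occurrences_cons, ih h.2, if_neg h.1]

/-! ### Words encoding sequences of gaps -/

/-- The Boolean word in which the blocks of `false` have the given lengths, each block being
preceded by two letters `true`. -/
def gapWord (ns : List ℕ) : List Bool :=
  ns.flatMap fun n => true :: true :: replicate n false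

theorem gapWord_cons (n : ℕ) (ns : List ℕ) :
    gapWord (n :: ns) = true :: true :: (replicate n false ++ gapWord ns) := by
  simp [gapWord]

theorem gapWord_append (ns ms : List ℕ) :
    gapWord (ns ++ ms) = gapWord ns ++ gapWord ms := by
  simp [gapWord]

/-- The pattern recording two consecutive gaps of lengths `a` and `b`. -/
def gapPattern (a b : ℕ) : List Bool :=
  gapWord [a, b] ++ [true, true]

theorem gapPattern_ne_nil (a b : ℕ) : gapPattern a b ≠ [] := by
  simp [gapPattern]

theorem gapPattern_eq (a b : ℕ) :
    gapPattern a b = true :: true :: (replicate a false ++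
      true :: true :: (replicate b false ++ [true, true])) := by
  simp [gapPattern, gapWord]

theorem reverse_gapPattern (a b : ℕ) : (gapPattern a b).reverse = gapPattern b a := by
  simp [gapPattern_eq]

theorem replicate_false_append_prefix {a n : ℕ} {x : List Bool} {ns : List ℕ}
    (h : replicate a false ++ true :: x <+: replicate n false ++ gapWord ns) :
    a = n ∧ true :: x <+: gapWord ns := by
  induction a generalizing n with
  | zero =>
    cases n with
    | zero => simpa using h
    | succ n => simp [replicate_succ] at h
  | succ a ih =>
    cases n with
    | zero =>
      cases ns with
      | nil => simp [replicate_succ, gapWord] at h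
      | cons m ns => simp [replicate_succ, gapWord_cons] at h
    | succ n =>
      simp only [replicate_succ, cons_append, cons_prefix_cons, true_and] at h
      obtain ⟨h₁, h₂⟩ := ih h
      exact ⟨by rw [h₁], h₂⟩

theorem infix_replicate_false_append {n : ℕ} {x S : List Bool}
    (h : true :: x <:+: replicate n false ++ S) : true :: x <:+: S := by
  induction n with
  | zero => simpa using h
  | succ n ih =>
    rw [replicate_succ, cons_append, infix_cons_iff] at h
    rcases h with h | h
    · simp at h
    · exact ih h

theorem gapPattern_infix_gapWord {a b : ℕ} {ns : List ℕ} (hns : ∀ n ∈ ns, 1 ≤ n) (ha : 1 ≤ a)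
    (h : gapPattern a b <:+: gapWord ns) : [a, b] <:+: ns := by
  induction ns with
  | nil => simp [gapWord, gapPattern_eq] at h
  | cons n ns ih =>
    have hn : 1 ≤ n := hns n (by simp)
    rw [gapWord_cons, infix_cons_iff, infix_cons_iff] at h
    rcases h with h | h | h
    · rw [gapPattern_eq] at h
      simp only [cons_prefix_cons, true_and] at h
      obtain ⟨rfl, h₂⟩ := replicate_false_append_prefix h
      cases ns with
      | nil => simp [gapWord] at h₂
      | cons m ns =>
        rw [gapWord_cons] at h₂
        simp only [cons_prefix_cons, true_and] at h₂
        obtain ⟨rfl, -⟩ := replicate_false_append_prefix h₂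
        exact ⟨[], ns, by simp⟩
    · obtain ⟨n, rfl⟩ := Nat.exists_eq_add_of_le' hn
      obtain ⟨a, rfl⟩ := Nat.exists_eq_add_of_le' ha
      simp [gapPattern_eq, replicate_succ] at h
    · rw [gapPattern_eq] at h
      have h' := infix_replicate_false_append h
      rw [← gapPattern_eq] at h'
      exact (ih (fun m hm => hns m (by simp [hm])) h').trans (suffix_cons n ns).isInfix

theorem not_true_true_true_infix_gapWord {ns : List ℕ} (hns : ∀ n ∈ ns, 1 ≤ n) :
    ¬ [true, true, true] <:+: gapWord ns := by
  induction ns with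
  | nil => simp [gapWord]
  | cons n ns ih =>
    have hn : 1 ≤ n := hns n (by simp)
    rw [gapWord_cons, infix_cons_iff, infix_cons_iff]
    obtain ⟨m, rfl⟩ := Nat.exists_eq_add_of_le' hn
    rintro (h | h | h)
    · simp [replicate_succ] at h
    · simp [replicate_succ] at h
    · exact ih (fun m hm => hns m (by simp [hm])) (infix_replicate_false_append h)

/-- The periodic sequence of gaps `a, b, 1, a, b, 1, …` with `K` periods. -/
def periodicGaps (a b K : ℕ) : List ℕ :=
  (replicate K [a, b, 1]).flatten

theorem periodicGaps_succ (a b K : ℕ) :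
    periodicGaps a b (K + 1) = a :: b :: 1 :: periodicGaps a b K := by
  simp [periodicGaps, replicate_succ]

theorem one_le_of_mem_periodicGaps {a b K : ℕ} (ha : 1 ≤ a) (hb : 1 ≤ b) :
    ∀ n ∈ periodicGaps a b K, 1 ≤ n := by
  intro n hn
  simp only [periodicGaps, mem_flatten, mem_replicate] at hn
  obtain ⟨l, ⟨-, rfl⟩, hn⟩ := hn
  simp only [mem_cons, not_mem_nil, or_false] at hn
  omega

theorem isChain_periodicGaps (a b K : ℕ) :
    (periodicGaps a b K).IsChain
      fun x y => (x = a ∧ y = b) ∨ (x = b ∧ y = 1) ∨ (x = 1 ∧ y = a) := by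
  induction K with
  | zero => simp [periodicGaps]
  | succ K ih =>
    rw [periodicGaps_succ]
    cases K with
    | zero => simp [periodicGaps]
    | succ K =>
      rw [periodicGaps_succ] at ih ⊢
      simp only [isChain_cons_cons] at ih ⊢
      exact ⟨by simp, by simp, by simp, ih⟩

theorem pair_infix_periodicGaps {a b x y K : ℕ} (h : [x, y] <:+: periodicGaps a b K) :
    (x = a ∧ y = b) ∨ (x = b ∧ y = 1) ∨ (x = 1 ∧ y = a) := by
  simpa using (isChain_periodicGaps a b K).infix h

theorem le_occurrences_gapPattern (a b K : ℕ) :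
    K ≤ occurrences (gapPattern a b) (gapWord (periodicGaps a b K)) := by
  induction K with
  | zero => simp
  | succ K ih =>
    have hsplit : gapWord (periodicGaps a b (K + 1)) =
        gapWord [a, b, 1] ++ gapWord (periodicGaps a b K) := by
      rw [← gapWord_append, periodicGaps_succ]; rfl
    have hone : 1 ≤ occurrences (gapPattern a b) (gapWord [a, b, 1]) := by
      have hpre : gapPattern a b <+: gapWord [a, b, 1] := ⟨[false], by simp [gapPattern, gapWord]⟩
      rw [gapWord_cons] at hpre ⊢
      rw [occurrences_cons, if_pos hpre]
      omega
    have := occurrences_append_ge (gapPattern a b) (gapWord [a, b, 1])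
      (gapWord (periodicGaps a b K)) (gapPattern_ne_nil a b)
    rw [hsplit]
    omega

end List

/-! ### Types of color words and their counting functions -/

namespace List

variable {α : Type*}

/-- The list of values of `R` on consecutive entries of a list. -/
def pairTypes (R : α → α → Bool) : List α → List Bool
  | [] => []
  | [_] => []
  | i :: j :: l => R i j :: pairTypes R (j :: l)

theorem pairTypes_append (R : α → α → Bool) (l₁ l₂ : List α) :
    ∃ m : List Bool, m.length ≤ 1 ∧
      pairTypes R (l₁ ++ l₂) = pairTypes R l₁ ++ (m ++ pairTypes R l₂) := by
  induction l₁ with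
  | nil => exact ⟨[], by simp [pairTypes]⟩
  | cons i l₁ ih =>
    cases l₁ with
    | nil =>
      cases l₂ with
      | nil => exact ⟨[], by simp [pairTypes]⟩
      | cons j l₂ => exact ⟨[R i j], by simp [pairTypes]⟩
    | cons j l₁ =>
      obtain ⟨m, hm, h⟩ := ih
      refine ⟨m, hm, ?_⟩
      simp only [cons_append, pairTypes] at h ⊢
      rw [h]

theorem pairTypes_concat_concat (R : α → α → Bool) (l : List α) (i j : α) :
    pairTypes R (l ++ [i, j]) = pairTypes R (l ++ [i]) ++ [R i j] := by
  induction l with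
  | nil => simp [pairTypes]
  | cons k l ih =>
    cases l with
    | nil => simp [pairTypes]
    | cons k' l => simpa [pairTypes] using ih

theorem pairTypes_reverse (R : α → α → Bool) (l : List α) :
    pairTypes R l.reverse = (pairTypes (fun i j => R j i) l).reverse := by
  induction l with
  | nil => simp [pairTypes]
  | cons i l ih =>
    cases l with
    | nil => simp [pairTypes]
    | cons j l =>
      rw [pairTypes, reverse_cons (as := pairTypes _ _), ← ih]
      simp only [reverse_cons, append_assoc, cons_append, nil_append]
      rw [pairTypes_concat_concat]

/-- The number of occurrences of the pattern `w` in the type of a word minus the number of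
its occurrences in the type of the reversed word. -/
def signedCount (R : α → α → Bool) (w : List Bool) (l : List α) : ℝ :=
  (occurrences w (pairTypes R l) : ℝ) - occurrences w (pairTypes R l.reverse)

theorem signedCount_reverse (R : α → α → Bool) (w : List Bool) (l : List α) :
    signedCount R w l.reverse = - signedCount R w l := by
  simp [signedCount]

theorem abs_occurrences_pairTypes_append_le (R : α → α → Bool) {w : List Bool} (hw : w ≠ [])
    (l₁ l₂ : List α) :
    |(occurrences w (pairTypes R (l₁ ++ l₂)) : ℝ) - occurrences w (pairTypes R l₁) -
      occurrences w (pairTypes R l₂)| ≤ 2 * w.length + 1 := by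
  obtain ⟨m, hm, h⟩ := pairTypes_append R l₁ l₂
  rw [h]
  have h₁ := occurrences_append_ge w (pairTypes R l₁) (m ++ pairTypes R l₂) hw
  have h₂ := occurrences_append_ge w m (pairTypes R l₂) hw
  have h₃ := occurrences_append_le w (pairTypes R l₁) (m ++ pairTypes R l₂) hw
  have h₄ := occurrences_append_le w m (pairTypes R l₂) hw
  have h₅ := occurrences_le_length w m hw
  have h₆ : occurrences w (pairTypes R l₁) + occurrences w (pairTypes R l₂) ≤
      occurrences w (pairTypes R l₁ ++ (m ++ pairTypes R l₂)) := by omega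
  have h₇ : occurrences w (pairTypes R l₁ ++ (m ++ pairTypes R l₂)) ≤
      occurrences w (pairTypes R l₁) + occurrences w (pairTypes R l₂) + (2 * w.length + 1) := by
    omega
  rify at h₆ h₇
  rw [abs_le]
  constructor <;> linarith

theorem abs_signedCount_append_le (R : α → α → Bool) {w : List Bool} (hw : w ≠ [])
    (l₁ l₂ : List α) :
    |signedCount R w (l₁ ++ l₂) - signedCount R w l₁ - signedCount R w l₂| ≤
      4 * w.length + 2 := by
  have h₁ := abs_le.1 (abs_occurrences_pairTypes_append_le R hw l₁ l₂)
  have h₂ := abs_le.1 (abs_occurrences_pairTypes_append_le R hw l₂.reverse l₁.reverse)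
  simp only [signedCount, reverse_append]
  rw [abs_le]
  constructor <;> linarith [h₁.1, h₁.2, h₂.1, h₂.2]

/-- A word of the form `a ++ b` has almost the same signed count as the sum of those of
`a ++ s` and `s.reverse ++ b`. -/
theorem abs_signedCount_cancel_le (R : α → α → Bool) {w : List Bool} (hw : w ≠ [])
    (a s b : List α) :
    |signedCount R w (a ++ b) - signedCount R w (a ++ s) - signedCount R w (s.reverse ++ b)| ≤
      3 * (4 * w.length + 2) := by
  have h₁ := abs_le.1 (abs_signedCount_append_le R hw a b)
  have h₂ := abs_le.1 (abs_signedCount_append_le R hw a s)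
  have h₃ := abs_le.1 (abs_signedCount_append_le R hw s.reverse b)
  have h₄ := signedCount_reverse R w s
  rw [abs_le]
  constructor <;> linarith [h₁.1, h₁.2, h₂.1, h₂.2, h₃.1, h₃.2]

/-! ### Reduced words -/

/-- Any two reduced words can be written as `a ++ s` and `s.reverse ++ b` with `a ++ b` reduced. -/
theorem exists_cancellation (u v : List α) (hu : u.IsChain (· ≠ ·)) (hv : v.IsChain (· ≠ ·)) :
    ∃ a s b : List α, u = a ++ s ∧ v = s.reverse ++ b ∧ (a ++ b).IsChain (· ≠ ·) := by
  induction u using List.reverseRecOn generalizing v with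
  | nil => exact ⟨[], [], v, by simpa using hv⟩
  | append_singleton u i ih =>
    cases v with
    | nil => exact ⟨u ++ [i], [], [], by simpa using hu⟩
    | cons j v =>
      by_cases hij : i = j
      · subst hij
        obtain ⟨a, s, b, rfl, rfl, h⟩ := ih v (List.isChain_append.1 hu).1
          (List.isChain_of_isChain_cons hv)
        exact ⟨a, s ++ [i], b, by simp, by simp, h⟩
      · refine ⟨u ++ [i], [], j :: v, by simp, by simp, List.isChain_append.2 ⟨hu, hv, ?_⟩⟩
        intro x hx y hy
        simp only [getLast?_append, getLast?_singleton, Option.some_or, Option.mem_def,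
          Option.some.injEq, head?_cons] at hx hy
        rwa [← hx, ← hy]

variable [DecidableEq α]

/-- Add a letter in front of a reduced word, cancelling it if possible. -/
def reducedCons (i : α) : List α → List α
  | [] => [i]
  | j :: l => if i = j then l else i :: j :: l

theorem IsChain.reducedCons (i : α) {l : List α} (h : l.IsChain (· ≠ ·)) :
    (reducedCons i l).IsChain (· ≠ ·) := by
  cases l with
  | nil => simp [List.reducedCons]
  | cons j l =>
    rw [List.reducedCons]
    split_ifs with hij
    · exact List.isChain_of_isChain_cons h
    · exact List.isChain_cons_cons.2 ⟨hij, h⟩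

/-- The free reduction of a word in involutive letters. -/
def involutiveReduction (l : List α) : List α :=
  l.foldr reducedCons []

theorem isChain_involutiveReduction (l : List α) :
    (involutiveReduction l).IsChain (· ≠ ·) := by
  induction l with
  | nil => simp [involutiveReduction]
  | cons i l ih => exact ih.reducedCons i

end List

/-! ### Realizing sequences of gaps by reduced words -/

/-- A Boolean relation `R` on `α` which, along suitable edges `i ≠ j`, is either symmetric
(`ε = false`) or antisymmetric (`ε = true`) and for which the letters `false` and `true true`
can be realized by such edges between points of a nonempty set. -/
structure RealizesGaps {α : Type*} (R : α → α → Bool) (ε : Bool) (A : Set α) : Prop where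
  nonempty : A.Nonempty
  exists_false : ∀ i ∈ A, ∃ j ∈ A, i ≠ j ∧ R i j = false ∧ R j i = ε
  exists_true_true : ∀ i ∈ A, ∃ k, ∃ j ∈ A, (i ≠ k ∧ R i k = true ∧ R k i = !ε) ∧
    (k ≠ j ∧ R k j = true ∧ R j k = !ε)

namespace List

variable {α : Type*}

theorem _root_.RealizesGaps.exists_chain {R : α → α → Bool} {ε : Bool} {A : Set α}
    (h : RealizesGaps R ε A) (ns : List ℕ) : ∀ i ∈ A, ∃ l : List α,
      (i :: l).IsChain (fun i j => i ≠ j ∧ R j i = (R i j ^^ ε)) ∧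
      pairTypes R (i :: l) = gapWord ns := by
  induction ns with
  | nil => exact fun i _ => ⟨[], by simp [pairTypes, gapWord]⟩
  | cons n ns ih =>
    have key : ∀ n : ℕ, ∀ i ∈ A, ∃ l : List α,
        (i :: l).IsChain (fun i j => i ≠ j ∧ R j i = (R i j ^^ ε)) ∧
        pairTypes R (i :: l) = replicate n false ++ gapWord ns := by
      intro n
      induction n with
      | zero => simpa using ih
      | succ n ihn =>
        intro i hi
        obtain ⟨j, hj, hij, h₁, h₂⟩ := h.exists_false i hi
        obtain ⟨l, hl, ht⟩ := ihn j hj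
        refine ⟨j :: l, isChain_cons_cons.2 ⟨⟨hij, by simp [h₁, h₂]⟩, hl⟩, ?_⟩
        rw [pairTypes, ht, h₁, replicate_succ, cons_append]
    intro i hi
    obtain ⟨k, j, hj, ⟨hik, h₁, h₂⟩, hkj, h₃, h₄⟩ := h.exists_true_true i hi
    obtain ⟨l, hl, ht⟩ := key n j hj
    refine ⟨k :: j :: l, isChain_cons_cons.2 ⟨⟨hik, by simp [h₁, h₂]⟩,
      isChain_cons_cons.2 ⟨⟨hkj, by simp [h₃, h₄]⟩, hl⟩⟩, ?_⟩
    rw [pairTypes, pairTypes, ht, h₁, h₃, gapWord_cons]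

theorem pairTypes_swap {R : α → α → Bool} {ε : Bool} {l : List α}
    (h : l.IsChain fun i j => i ≠ j ∧ R j i = (R i j ^^ ε)) :
    pairTypes (fun i j => R j i) l = (pairTypes R l).map (· ^^ ε) := by
  induction l with
  | nil => simp [pairTypes]
  | cons i l ih =>
    cases l with
    | nil => simp [pairTypes]
    | cons j l =>
      rw [isChain_cons_cons] at h
      rw [pairTypes, pairTypes, ih h.2, map_cons, h.1.2]

/-- The patterns used to define quasimorphisms. -/
def chiralPattern (k : ℕ) : List Bool :=
  gapPattern (2 * k + 4) (2 * k + 5)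

theorem chiralPattern_ne_nil (k : ℕ) : chiralPattern k ≠ [] :=
  gapPattern_ne_nil _ _

theorem _root_.RealizesGaps.exists_word {R : α → α → Bool} {ε : Bool} {A : Set α}
    (h : RealizesGaps R ε A) (k K : ℕ) : ∃ u : List α, u.IsChain (· ≠ ·) ∧
      (K : ℝ) ≤ signedCount R (chiralPattern k) u ∧
      ∀ j, j ≠ k → signedCount R (chiralPattern j) u = 0 := by
  obtain ⟨i, hi⟩ := h.nonempty
  obtain ⟨l, hl, ht⟩ := h.exists_chain (periodicGaps (2 * k + 4) (2 * k + 5) K) i hi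
  have hpos : ∀ n ∈ periodicGaps (2 * k + 4) (2 * k + 5) K, 1 ≤ n :=
    one_le_of_mem_periodicGaps (by omega) (by omega)
  have hrev : ∀ j, occurrences (chiralPattern j) (pairTypes R (i :: l).reverse) = 0 := by
    intro j
    apply occurrences_eq_zero (chiralPattern_ne_nil j)
    rw [pairTypes_reverse, pairTypes_swap hl, ht, ← reverse_infix, reverse_reverse,
      chiralPattern, reverse_gapPattern]
    intro hinf
    cases ε with
    | false =>
      simp only [Bool.xor_false, map_id'] at hinf
      have := pair_infix_periodicGaps (gapPattern_infix_gapWord hpos (by omega) hinf)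
      omega
    | true =>
      have hinf' := hinf.map (· ^^ true)
      rw [map_map] at hinf'
      have hid : (fun b : Bool => b ^^ true) ∘ (fun b : Bool => b ^^ true) = id := by
        funext b; simp
      rw [hid, map_id] at hinf'
      refine not_true_true_true_infix_gapWord hpos (IsInfix.trans ?_ hinf')
      refine ⟨[false, false], replicate (2 * j + 2) true ++
        (false :: false :: (replicate (2 * j + 4) true ++ [false, false])), ?_⟩
      simp [gapPattern_eq, replicate_succ]
  refine ⟨i :: l, hl.imp fun _ _ h => h.1, ?_, fun j hj => ?_⟩
  · rw [signedCount, hrev, ht]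
    simpa [chiralPattern] using le_occurrences_gapPattern (2 * k + 4) (2 * k + 5) K
  · rw [signedCount, hrev, ht, occurrences_eq_zero (chiralPattern_ne_nil j), sub_self]
    intro hinf
    have := pair_infix_periodicGaps (gapPattern_infix_gapWord hpos (by omega) hinf)
    omega

end List

/-! ### Invariant relations of permutation groups that are not 2-transitive -/

theorem exists_realizesGaps {d : ℕ} (hd : 3 ≤ d) (F : Subgroup (Equiv.Perm (Fin d)))
    (hF : ¬∀ i j k l : Fin d, i ≠ j → k ≠ l → ∃ π ∈ F, π i = k ∧ π j = l) :
    ∃ (R : Fin d → Fin d → Bool) (ε : Bool) (A : Set (Fin d)),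
      (∀ π ∈ F, ∀ i j, R (π i) (π j) = R i j) ∧ RealizesGaps R ε A := by
  classical
  by_cases htrans : ∀ i j : Fin d, ∃ π ∈ F, π i = j
  · push Not at hF
    obtain ⟨i, j, k, l, hij, hkl, hF⟩ := hF
    set R : Fin d → Fin d → Bool := fun p q => decide (∃ π ∈ F, π i = p ∧ π j = q) with hR
    have hRinv : ∀ π ∈ F, ∀ p q, R (π p) (π q) = R p q := by
      intro π hπ p q
      simp only [hR, decide_eq_decide]
      constructor
      · rintro ⟨τ, hτ, h₁, h₂⟩
        exact ⟨π⁻¹ * τ, F.mul_mem (F.inv_mem hπ) hτ, by simp [h₁], by simp [h₂]⟩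
      · rintro ⟨τ, hτ, h₁, h₂⟩
        exact ⟨π * τ, F.mul_mem hπ hτ, by simp [h₁], by simp [h₂]⟩
    have hRij : R i j = true := by simpa [hR] using ⟨1, F.one_mem, by simp⟩
    have hRkl : R k l = false := by
      simp only [hR, decide_eq_false_iff_not, not_exists, not_and]
      exact fun π hπ h => hF π hπ h
    have move : ∀ a b p : Fin d, a ≠ b → ∃ q, p ≠ q ∧ R p q = R a b ∧ R q p = R b a := by
      intro a b p hab
      obtain ⟨π, hπ, rfl⟩ := htrans a p
      exact ⟨π b, π.injective.ne hab, hRinv π hπ _ _, hRinv π hπ _ _⟩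
    by_cases hsymm : R j i = true
    · have hRsymm : ∀ p q, R p q = true → R q p = true := by
        intro p q h
        simp only [hR, decide_eq_true_eq] at h
        obtain ⟨π, hπ, rfl, rfl⟩ := h
        rw [hRinv π hπ, hsymm]
      have hRlk : R l k = false := by
        by_contra h
        simp [hRsymm l k (by simpa using h)] at hRkl
      refine ⟨R, false, Set.univ, hRinv, ⟨i, trivial⟩, fun p _ => ?_, fun p _ => ?_⟩
      · obtain ⟨q, h₁, h₂, h₃⟩ := move k l p hkl
        exact ⟨q, trivial, h₁, h₂.trans hRkl, h₃.trans hRlk⟩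
      · obtain ⟨q, h₁, h₂, h₃⟩ := move i j p hij
        obtain ⟨r, h₄, h₅, h₆⟩ := move i j q hij
        exact ⟨q, r, trivial, ⟨h₁, h₂.trans hRij, h₃.trans hsymm⟩,
          h₄, h₅.trans hRij, h₆.trans hsymm⟩
    · rw [Bool.not_eq_true] at hsymm
      refine ⟨R, true, Set.univ, hRinv, ⟨i, trivial⟩, fun p _ => ?_, fun p _ => ?_⟩
      · obtain ⟨q, h₁, h₂, h₃⟩ := move j i p hij.symm
        exact ⟨q, trivial, h₁, h₂.trans hsymm, h₃.trans hRij⟩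
      · obtain ⟨q, h₁, h₂, h₃⟩ := move i j p hij
        obtain ⟨r, h₄, h₅, h₆⟩ := move i j q hij
        exact ⟨q, r, trivial, ⟨h₁, h₂.trans hRij, h₃.trans hsymm⟩,
          h₄, h₅.trans hRij, h₆.trans hsymm⟩
  · push Not at htrans
    obtain ⟨i, j, hij⟩ := htrans
    obtain ⟨A, hA, ⟨p, hp, q, hq, hpq⟩, y, hy⟩ : ∃ A : Set (Fin d),
        (∀ π ∈ F, ∀ x, π x ∈ A ↔ x ∈ A) ∧ A.Nontrivial ∧ ∃ y, y ∉ A := by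
      set O : Set (Fin d) := {x | ∃ π ∈ F, π i = x} with hO
      have hOinv : ∀ π ∈ F, ∀ x, π x ∈ O ↔ x ∈ O := by
        intro π hπ x
        constructor
        · rintro ⟨τ, hτ, h⟩
          exact ⟨π⁻¹ * τ, F.mul_mem (F.inv_mem hπ) hτ, by simp [h]⟩
        · rintro ⟨τ, hτ, h⟩
          exact ⟨π * τ, F.mul_mem hπ hτ, by simp [h]⟩
      have hiO : i ∈ O := ⟨1, F.one_mem, rfl⟩
      have hjO : j ∉ O := fun ⟨π, hπ, h⟩ => hij π hπ h
      have hne : i ≠ j := fun h => hjO (h ▸ hiO)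
      obtain ⟨m, hmi, hmj⟩ : ∃ m : Fin d, m ≠ i ∧ m ≠ j := by
        obtain ⟨m, hm⟩ := Finset.exists_mem_notMem_of_card_lt_card
          (s := {i, j}) (t := (Finset.univ : Finset (Fin d))) (by
            rw [Finset.card_pair hne, Finset.card_fin]; omega)
        exact ⟨m, by simpa using hm⟩
      by_cases hmO : m ∈ O
      · exact ⟨O, hOinv, ⟨m, hmO, i, hiO, hmi⟩, j, hjO⟩
      · exact ⟨Oᶜ, fun π hπ x => not_congr (hOinv π hπ x), ⟨m, hmO, j, hjO, hmj⟩, i,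
          fun h => h hiO⟩
    refine ⟨fun a b => decide (¬(a ∈ A ∧ b ∈ A)), false, A, ?_, ⟨p, hp⟩, ?_, ?_⟩
    · intro π hπ a b
      simp only [hA π hπ]
    · intro a ha
      by_cases hap : a = p
      · exact ⟨q, hq, hap ▸ hpq, by simp [ha, hq]⟩
      · exact ⟨p, hp, hap, by simp [ha, hp]⟩
    · intro a ha
      have hay : a ≠ y := fun h => hy (h ▸ ha)
      exact ⟨y, a, ha, ⟨hay, by simp [hy], by simp [hy]⟩, hay.symm, by simp [hy], by simp [hy]⟩

/-! ### Homogenization of quasimorphisms -/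

section Homogenization

open Filter Topology

variable {G : Type*} [Group G]

theorem abs_map_pow_sub_le {f : G → ℝ} {D : ℝ}
    (hf : ∀ a b, |f (a * b) - f a - f b| ≤ D) (g : G) (n : ℕ) :
    |f (g ^ (n + 1)) - (n + 1) * f g| ≤ n * D := by
  induction n with
  | zero => simp
  | succ n ih =>
    have h := abs_le.1 (hf (g ^ (n + 1)) g)
    have ih := abs_le.1 ih
    rw [pow_succ g (n + 1)]
    push_cast
    rw [abs_le]
    constructor <;> linarith [h.1, h.2, ih.1, ih.2]

theorem exists_tendsto_map_pow_div {f : G → ℝ} {D : ℝ}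
    (hf : ∀ a b, |f (a * b) - f a - f b| ≤ D) (g : G) :
    ∃ L : ℝ, Tendsto (fun n : ℕ => f (g ^ n) / n) atTop (𝓝 L) ∧ |L - f g| ≤ D := by
  have hD : 0 ≤ D := (abs_nonneg _).trans (hf 1 1)
  have hsub : Subadditive fun n : ℕ => f (g ^ n) + D := by
    intro m n
    have h := abs_le.1 (hf (g ^ m) (g ^ n))
    simp only [pow_add]
    linarith [h.2]
  have hbound : ∀ n : ℕ, |f (g ^ (n + 1)) / ((n + 1 : ℕ) : ℝ) - f g| ≤ D := by
    intro n
    have hn : (0 : ℝ) < n + 1 := by positivity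
    have h := abs_map_pow_sub_le hf g n
    have heq : f (g ^ (n + 1)) / ((n + 1 : ℕ) : ℝ) - f g =
        (f (g ^ (n + 1)) - (n + 1) * f g) / (n + 1) := by
      push_cast
      field_simp
    rw [heq, abs_div, abs_of_pos hn, div_le_iff₀ hn]
    linarith
  have hbdd : BddBelow (Set.range fun n : ℕ => (f (g ^ n) + D) / n) := by
    refine ⟨-|f g| - D, ?_⟩
    rintro _ ⟨n, rfl⟩
    cases n with
    | zero =>
      simp only [Nat.cast_zero, div_zero]
      linarith [abs_nonneg (f g)]
    | succ n =>
      have h := (abs_le.1 (hbound n)).1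
      have h' : 0 ≤ D / ((n + 1 : ℕ) : ℝ) := by positivity
      simp only [add_div]
      linarith [neg_abs_le (f g)]
  have hlim := hsub.tendsto_lim hbdd
  have hzero : Tendsto (fun n : ℕ => D / (n : ℝ)) atTop (𝓝 0) :=
    tendsto_const_nhds.div_atTop tendsto_natCast_atTop_atTop
  have hlim' : Tendsto (fun n : ℕ => f (g ^ n) / n) atTop (𝓝 hsub.lim) := by
    have := hlim.sub hzero
    rw [sub_zero] at this
    refine this.congr fun n => ?_
    rw [add_div, add_sub_cancel_right]
  refine ⟨_, hlim', le_of_tendsto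
    ((hlim'.comp (tendsto_add_atTop_nat 1)).sub_const (f g)).abs
    (Eventually.of_forall fun n => hbound n)⟩

/-- An antisymmetric quasimorphism is at bounded distance from a homogeneous one. -/
theorem exists_homogeneous_quasimorphism {f : G → ℝ} {D : ℝ}
    (hf : ∀ a b, |f (a * b) - f a - f b| ≤ D) (hinv : ∀ g, f g⁻¹ = - f g) :
    ∃ φ : G → ℝ, (∃ D' : ℝ, ∀ a b, |φ (a * b) - φ a - φ b| ≤ D') ∧
      (∀ (g : G) (n : ℤ), φ (g ^ n) = n * φ g) ∧ ∀ g, |φ g - f g| ≤ D := by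
  choose φ hφ hφf using exists_tendsto_map_pow_div hf
  have hφinv : ∀ g, φ g⁻¹ = - φ g := by
    intro g
    refine tendsto_nhds_unique (hφ g⁻¹) ((hφ g).neg.congr fun n => ?_)
    rw [inv_pow, hinv, neg_div]
  have hφpow : ∀ (g : G) (n : ℕ), φ (g ^ n) = n * φ g := by
    intro g n
    cases n with
    | zero =>
      have h : Tendsto (fun n : ℕ => f (1 ^ n) / (n : ℝ)) atTop (𝓝 0) := by
        simp only [one_pow]
        exact tendsto_const_nhds.div_atTop tendsto_natCast_atTop_atTop
      simpa using tendsto_nhds_unique (hφ 1) h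
    | succ n =>
      have h := ((hφ g).comp (tendsto_id.const_mul_atTop' (Nat.succ_pos n))).const_mul
        ((n + 1 : ℕ) : ℝ)
      refine tendsto_nhds_unique (hφ _) (h.congr fun m => ?_)
      simp only [Function.comp_apply, id_eq, Nat.succ_eq_add_one, pow_mul]
      push_cast
      have hn : (n : ℝ) + 1 ≠ 0 := by positivity
      rcases eq_or_ne (m : ℝ) 0 with hm | hm
      · simp [hm]
      · field_simp
  refine ⟨φ, ⟨4 * D, fun a b => ?_⟩, fun g n => ?_, hφf⟩
  · have h₁ := abs_le.1 (hφf (a * b))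
    have h₂ := abs_le.1 (hφf a)
    have h₃ := abs_le.1 (hφf b)
    have h₄ := abs_le.1 (hf a b)
    rw [abs_le]
    constructor <;> linarith [h₁.1, h₁.2, h₂.1, h₂.2, h₃.1, h₃.2, h₄.1, h₄.2]
  · obtain ⟨m, rfl | rfl⟩ := n.eq_nat_or_neg
    · simpa using hφpow g m
    · simp [hφinv, hφpow]

end Homogenization

/-! ### Color words in legally colored trees -/

namespace LegalColoring

variable {V : Type*} {T : SimpleGraph V} {d : ℕ} (C : LegalColoring T d)

/-- The neighbor of `v` along the edge of color `i`. -/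
noncomputable def neighbor (v : V) (i : Fin d) : V :=
  (C.bij v i).choose

theorem adj_neighbor (v : V) (i : Fin d) : T.Adj v (C.neighbor v i) :=
  (C.bij v i).choose_spec.1.1

@[simp]
theorem color_neighbor (v : V) (i : Fin d) : C.color v (C.neighbor v i) = i :=
  (C.bij v i).choose_spec.1.2

theorem neighbor_color {v w : V} (h : T.Adj v w) : C.neighbor v (C.color v w) = w :=
  (C.bij v (C.color v w)).unique ⟨C.adj_neighbor v _, C.color_neighbor v _⟩ ⟨h, rfl⟩

@[simp]
theorem color_neighbor_left (v : V) (i : Fin d) : C.color (C.neighbor v i) v = i := by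
  rw [← C.symm (C.adj_neighbor v i), color_neighbor]

@[simp]
theorem neighbor_neighbor (v : V) (i : Fin d) : C.neighbor (C.neighbor v i) i = v := by
  conv_lhs => rw [← C.color_neighbor_left v i]
  rw [C.color_neighbor_left v i]
  simpa using C.neighbor_color (C.adj_neighbor v i).symm

/-- The endpoint of the walk starting at `v` whose edges have the given colors. -/
noncomputable def follow (v : V) (l : List (Fin d)) : V :=
  l.foldl C.neighbor v

@[simp]
theorem follow_nil (v : V) : C.follow v [] = v := rfl

@[simp]
theorem follow_cons (v : V) (i : Fin d) (l : List (Fin d)) :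
    C.follow v (i :: l) = C.follow (C.neighbor v i) l := rfl

@[simp]
theorem follow_append (v : V) (l₁ l₂ : List (Fin d)) :
    C.follow v (l₁ ++ l₂) = C.follow (C.follow v l₁) l₂ := by
  simp [follow]

theorem follow_follow_reverse (v : V) (l : List (Fin d)) :
    C.follow (C.follow v l) l.reverse = v := by
  induction l generalizing v with
  | nil => simp
  | cons i l ih => simp [ih]

theorem follow_reducedCons (v : V) (i : Fin d) (l : List (Fin d)) :
    C.follow v (List.reducedCons i l) = C.follow v (i :: l) := by
  cases l with
  | nil => rfl
  | cons j l =>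
    rw [List.reducedCons]
    split_ifs with h
    · simp [h]
    · rfl

theorem follow_involutiveReduction (v : V) (l : List (Fin d)) :
    C.follow v l.involutiveReduction = C.follow v l := by
  induction l generalizing v with
  | nil => rfl
  | cons i l ih =>
    change C.follow v (List.reducedCons i l.involutiveReduction) = _
    rw [follow_reducedCons, follow_cons, ih, follow_cons]

/-- The list of colors of the edges of a walk. -/
def walkColors : {v w : V} → T.Walk v w → List (Fin d)
  | _, _, .nil => []
  | v, _, .cons (v := u) _ p => C.color v u :: walkColors p

theorem follow_walkColors {v w : V} (p : T.Walk v w) : C.follow v (C.walkColors p) = w := by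
  induction p with
  | nil => rfl
  | cons h p ih => rw [walkColors, follow_cons, C.neighbor_color h, ih]

theorem exists_isPath (hT : T.IsAcyclic) (l : List (Fin d)) (hl : l.IsChain (· ≠ ·)) {v w : V}
    (h : C.follow v l = w) : ∃ p : T.Walk v w, p.IsPath ∧ C.walkColors p = l := by
  have key : ∀ (l : List (Fin d)), l.IsChain (· ≠ ·) → ∀ v w : V, C.follow v l = w →
      ∃ p : T.Walk v w, p.edges.IsChain (· ≠ ·) ∧ C.walkColors p = l ∧
        ∀ i ∈ l.head?, p.edges.head? = some s(v, C.neighbor v i) := by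
    intro l
    induction l with
    | nil =>
      rintro - v w rfl
      exact ⟨.nil, by simp, rfl, by simp⟩
    | cons i l ih =>
      intro hl v w h
      obtain ⟨p, hp, hc, hhead⟩ := ih hl.of_cons (C.neighbor v i) w h
      refine ⟨.cons (C.adj_neighbor v i) p, ?_, by simp [walkColors, hc], by simp⟩
      rw [SimpleGraph.Walk.edges_cons, List.isChain_cons]
      refine ⟨fun e he => ?_, hp⟩
      cases l with
      | nil =>
        cases p with
        | nil => simp at he
        | cons h p => simp [walkColors] at hc
      | cons j l =>
        rw [hhead j (by simp)] at he
        obtain rfl : _ = e := by simpa using he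
        intro heq
        have hij : i ≠ j := (List.isChain_cons_cons.1 hl).1
        have hv : v = C.neighbor (C.neighbor v i) j := by
          rcases Sym2.eq_iff.1 heq with ⟨h₁, -⟩ | ⟨h₁, -⟩
          · exact absurd h₁ (C.adj_neighbor v i).ne
          · exact h₁
        apply hij
        have h₁ := C.color_neighbor (C.neighbor v i) j
        rw [← hv, color_neighbor_left] at h₁
        exact h₁
  obtain ⟨p, hp, hc, -⟩ := key l hl v w h
  exact ⟨p, hT.isPath_iff_isChain p |>.2 hp, hc⟩

theorem eq_of_follow_eq (hT : T.IsTree) {l₁ l₂ : List (Fin d)} (h₁ : l₁.IsChain (· ≠ ·))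
    (h₂ : l₂.IsChain (· ≠ ·)) {v : V} (h : C.follow v l₁ = C.follow v l₂) : l₁ = l₂ := by
  obtain ⟨p, hp, rfl⟩ := C.exists_isPath hT.isAcyclic l₁ h₁ h
  obtain ⟨q, hq, h'⟩ := C.exists_isPath hT.isAcyclic l₂ h₂ (v := v) rfl
  exact (congrArg C.walkColors ((hT.existsUnique_path _ _).unique hp hq)).trans h'

theorem exists_reduced_word (hT : T.IsTree) (v w : V) :
    ∃ l : List (Fin d), l.IsChain (· ≠ ·) ∧ C.follow v l = w := by
  obtain ⟨p⟩ := hT.connected.preconnected v w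
  exact ⟨(C.walkColors p).involutiveReduction, List.isChain_involutiveReduction _, by
    rw [follow_involutiveReduction, follow_walkColors]⟩

/-- The reduced color word of the geodesic between two vertices of a tree. -/
noncomputable def geodesicWord (hT : T.IsTree) (v w : V) : List (Fin d) :=
  (C.exists_reduced_word hT v w).choose

theorem isChain_geodesicWord (hT : T.IsTree) (v w : V) :
    (C.geodesicWord hT v w).IsChain (· ≠ ·) :=
  (C.exists_reduced_word hT v w).choose_spec.1

theorem follow_geodesicWord (hT : T.IsTree) (v w : V) :
    C.follow v (C.geodesicWord hT v w) = w :=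
  (C.exists_reduced_word hT v w).choose_spec.2

theorem geodesicWord_eq (hT : T.IsTree) {v w : V} {l : List (Fin d)} (hl : l.IsChain (· ≠ ·))
    (h : C.follow v l = w) : C.geodesicWord hT v w = l :=
  C.eq_of_follow_eq hT (C.isChain_geodesicWord hT v w) hl
    ((C.follow_geodesicWord hT v w).trans h.symm)

theorem geodesicWord_swap (hT : T.IsTree) (v w : V) :
    C.geodesicWord hT w v = (C.geodesicWord hT v w).reverse := by
  apply C.geodesicWord_eq hT
  · rw [List.isChain_reverse]
    exact (C.isChain_geodesicWord hT v w).imp fun _ _ h => h.symm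
  · conv_lhs => rw [← C.follow_geodesicWord hT v w]
    rw [C.follow_geodesicWord hT v w]
    nth_rewrite 1 [← C.follow_geodesicWord hT v w]
    exact C.follow_follow_reverse v _

theorem abs_signedCount_geodesicWord_le (hT : T.IsTree) (R : Fin d → Fin d → Bool)
    {w : List Bool} (hw : w ≠ []) (x y z : V) :
    |List.signedCount R w (C.geodesicWord hT x z) - List.signedCount R w (C.geodesicWord hT x y) -
      List.signedCount R w (C.geodesicWord hT y z)| ≤ 3 * (4 * w.length + 2) := by
  obtain ⟨a, s, b, h₁, h₂, h₃⟩ := List.exists_cancellation _ _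
    (C.isChain_geodesicWord hT x y) (C.isChain_geodesicWord hT y z)
  have h₄ : C.geodesicWord hT x z = a ++ b := by
    apply C.geodesicWord_eq hT h₃
    have hy := C.follow_geodesicWord hT x y
    have hz := C.follow_geodesicWord hT y z
    rw [h₁, follow_append] at hy
    rw [h₂, ← hy, follow_append, follow_follow_reverse] at hz
    rw [follow_append, hz]
  rw [h₁, h₂, h₄]
  exact List.abs_signedCount_cancel_le R hw a s b

/-! ### Images of color words under automorphisms -/

/-- The color word of the image under `g` of the walk from `v` with a given color word. -/
noncomputable def imageWord (g : Equiv.Perm V) : V → List (Fin d) → List (Fin d)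
  | _, [] => []
  | v, i :: l => C.color (g v) (g (C.neighbor v i)) :: imageWord g (C.neighbor v i) l

theorem follow_imageWord {g : Equiv.Perm V} (hg : g ∈ T.autSubgroup) (v : V)
    (l : List (Fin d)) : C.follow (g v) (C.imageWord g v l) = g (C.follow v l) := by
  induction l generalizing v with
  | nil => rfl
  | cons i l ih =>
    rw [imageWord, follow_cons, C.neighbor_color ((hg _ _).2 (C.adj_neighbor v i)), ih,
      follow_cons]

theorem pairTypes_imageWord {F : Subgroup (Equiv.Perm (Fin d))} {g : Equiv.Perm V}
    (hg : g ∈ USet T C F) {R : Fin d → Fin d → Bool}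
    (hR : ∀ π ∈ F, ∀ i j, R (π i) (π j) = R i j) (v : V) (l : List (Fin d)) :
    List.pairTypes R (C.imageWord g v l) = List.pairTypes R l := by
  induction l generalizing v with
  | nil => rfl
  | cons i l ih =>
    cases l with
    | nil => rfl
    | cons j l =>
      have ih := ih (C.neighbor v i)
      rw [imageWord] at ih
      rw [imageWord, imageWord, List.pairTypes, List.pairTypes, ih]
      obtain ⟨π, hπ, h⟩ := hg.2 (C.neighbor v i)
      have h₁ := h (C.adj_neighbor v i).symm
      rw [C.symm ((hg.1 _ _).2 (C.adj_neighbor v i).symm), color_neighbor_left] at h₁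
      rw [h₁, h (C.adj_neighbor _ j), color_neighbor, hR π hπ]

theorem signedCount_imageWord {F : Subgroup (Equiv.Perm (Fin d))} {g : Equiv.Perm V}
    (hg : g ∈ USet T C F) {R : Fin d → Fin d → Bool}
    (hR : ∀ π ∈ F, ∀ i j, R (π i) (π j) = R i j) (w : List Bool) (v : V) (l : List (Fin d)) :
    List.signedCount R w (C.imageWord g v l) = List.signedCount R w l := by
  rw [List.signedCount, List.signedCount, List.pairTypes_reverse, List.pairTypes_reverse,
    C.pairTypes_imageWord hg hR, C.pairTypes_imageWord hg fun π hπ i j => hR π hπ j i]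

theorem isChain_imageWord (g : Equiv.Perm V) (hg : g ∈ T.autSubgroup) (v : V)
    {l : List (Fin d)} (hl : l.IsChain (· ≠ ·)) : (C.imageWord g v l).IsChain (· ≠ ·) := by
  induction l generalizing v with
  | nil => simp [imageWord]
  | cons i l ih =>
    cases l with
    | nil => simp [imageWord]
    | cons j l =>
      rw [List.isChain_cons_cons] at hl
      have ih := ih (C.neighbor v i) hl.2
      rw [imageWord] at ih
      rw [imageWord, imageWord, List.isChain_cons_cons]
      refine ⟨fun h => hl.1 ?_, ih⟩
      have ha := (hg _ _).2 (C.adj_neighbor v i)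
      rw [C.symm ha] at h
      have h₁ := C.neighbor_color ha.symm
      rw [h, C.neighbor_color ((hg _ _).2 (C.adj_neighbor _ j))] at h₁
      have h₂ := C.color_neighbor (C.neighbor v i) j
      rw [g.injective h₁, color_neighbor_left] at h₂
      exact h₂

theorem signedCount_geodesicWord_map (hT : T.IsTree) {F : Subgroup (Equiv.Perm (Fin d))}
    {g : Equiv.Perm V} (hg : g ∈ USet T C F) {R : Fin d → Fin d → Bool}
    (hR : ∀ π ∈ F, ∀ i j, R (π i) (π j) = R i j) (w : List Bool) (x y : V) :
    List.signedCount R w (C.geodesicWord hT (g x) (g y)) =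
      List.signedCount R w (C.geodesicWord hT x y) := by
  rw [C.geodesicWord_eq hT (C.isChain_imageWord g hg.1 x (C.isChain_geodesicWord hT x y)),
    C.signedCount_imageWord hg hR]
  rw [C.follow_imageWord hg.1, follow_geodesicWord]

/-! ### Color-preserving automorphisms -/

theorem follow_eq_follow (hT : T.IsTree) {v : V} (w : V) {l₁ l₂ : List (Fin d)}
    (h : C.follow v l₁ = C.follow v l₂) : C.follow w l₁ = C.follow w l₂ := by
  rw [← C.follow_involutiveReduction v l₁, ← C.follow_involutiveReduction v l₂] at h
  rw [← C.follow_involutiveReduction w l₁, ← C.follow_involutiveReduction w l₂,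
    C.eq_of_follow_eq hT (List.isChain_involutiveReduction _)
      (List.isChain_involutiveReduction _) h]

/-- The color-preserving automorphism of a tree which maps `v` to `w`. -/
noncomputable def translation (hT : T.IsTree) (v w : V) : Equiv.Perm V where
  toFun x := C.follow w (C.geodesicWord hT v x)
  invFun x := C.follow v (C.geodesicWord hT w x)
  left_inv x := by
    beta_reduce
    rw [C.geodesicWord_eq hT (C.isChain_geodesicWord hT v x) rfl, follow_geodesicWord]
  right_inv x := by
    beta_reduce
    rw [C.geodesicWord_eq hT (C.isChain_geodesicWord hT w x) rfl, follow_geodesicWord]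

theorem translation_follow (hT : T.IsTree) (v w : V) (l : List (Fin d)) :
    C.translation hT v w (C.follow v l) = C.follow w l :=
  C.follow_eq_follow hT w (C.follow_geodesicWord hT v _)

theorem translation_neighbor (hT : T.IsTree) (v w x : V) (i : Fin d) :
    C.translation hT v w (C.neighbor x i) = C.neighbor (C.translation hT v w x) i := by
  obtain ⟨l, -, rfl⟩ := C.exists_reduced_word hT v x
  have h : ∀ u, C.neighbor (C.follow u l) i = C.follow u (l ++ [i]) := fun u => by simp
  rw [translation_follow, h, h, translation_follow]

theorem translation_mem_autSubgroup (hT : T.IsTree) (v w : V) :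
    C.translation hT v w ∈ T.autSubgroup := by
  have key : ∀ v w x y, T.Adj x y →
      T.Adj (C.translation hT v w x) (C.translation hT v w y) := by
    intro v w x y h
    rw [← C.neighbor_color h, translation_neighbor]
    exact C.adj_neighbor _ _
  intro x y
  refine ⟨fun h => ?_, key v w x y⟩
  have h' : T.Adj ((C.translation hT v w).symm (C.translation hT v w x))
      ((C.translation hT v w).symm (C.translation hT v w y)) := key w v _ _ h
  simpa only [Equiv.symm_apply_apply] using h'

theorem localIn_translation (hT : T.IsTree) (F : Subgroup (Equiv.Perm (Fin d))) (v w x : V) :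
    LocalIn T C F (C.translation hT v w) x := by
  refine ⟨1, F.one_mem, fun y h => ?_⟩
  rw [Equiv.Perm.one_apply]
  nth_rewrite 1 [← C.neighbor_color h]
  rw [translation_neighbor, color_neighbor]

theorem translation_mem_GFFSet (hT : T.IsTree) (F F' : Subgroup (Equiv.Perm (Fin d)))
    (v w : V) : C.translation hT v w ∈ GFFSet T C F F' := by
  refine ⟨⟨C.translation_mem_autSubgroup hT v w, ?_⟩, C.translation_mem_autSubgroup hT v w,
    fun x => C.localIn_translation hT F' v w x⟩
  simp [C.localIn_translation hT F v w]

theorem translation_neighbor_mul_self (hT : T.IsTree) (v : V) (i : Fin d) :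
    C.translation hT v (C.neighbor v i) * C.translation hT v (C.neighbor v i) = 1 := by
  ext x
  obtain ⟨l, -, rfl⟩ := C.exists_reduced_word hT v x
  rw [Equiv.Perm.mul_apply, translation_follow, ← follow_cons, translation_follow,
    follow_cons, neighbor_neighbor, Equiv.Perm.one_apply]

end LegalColoring

/-- If `F'` is not 2-transitive, then the space of homogeneous quasimorphisms of
`G(F, F')` modulo real homomorphisms is infinite dimensional: there is a sequence of
homogeneous quasimorphisms no nontrivial finite linear combination of which is a
homomorphism to `ℝ`. -/
theorem GFF_homogeneous_quasimorphisms_infinite {V : Type*} (d : ℕ) (hd : 3 ≤ d)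
    (F F' : Subgroup (Equiv.Perm (Fin d))) (hle : F ≤ F')
    (horb : ∀ π' ∈ F', ∀ i : Fin d, ∃ π ∈ F, π i = π' i)
    (hn2t : ¬∀ i j k l : Fin d, i ≠ j → k ≠ l → ∃ π ∈ F', π i = k ∧ π j = l)
    (T : SimpleGraph V) (hT : T.IsTree) (C : LegalColoring T d)
    (Γ : Subgroup (Equiv.Perm V)) (hΓ : (Γ : Set (Equiv.Perm V)) = GFFSet T C F F') :
    ∃ φ : ℕ → (Γ → ℝ),
      (∀ k : ℕ, (∃ D : ℝ, ∀ a b : Γ, |φ k (a * b) - φ k a - φ k b| ≤ D) ∧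
        (∀ (g : Γ) (n : ℤ), φ k (g ^ n) = (n : ℝ) * φ k g)) ∧
      (∀ c : ℕ →₀ ℝ,
        (∀ a b : Γ, (c.sum fun k ck => ck * φ k (a * b)) =
          (c.sum fun k ck => ck * φ k a) + c.sum fun k ck => ck * φ k b) → c = 0) := by
  obtain ⟨R, ε, A, hR, hgaps⟩ := exists_realizesGaps hd F' hn2t
  obtain ⟨v₀⟩ := hT.connected.nonempty
  have hU : ∀ g : Γ, (g : Equiv.Perm V) ∈ USet T C F' := by
    intro g
    have hg : (g : Equiv.Perm V) ∈ (Γ : Set (Equiv.Perm V)) := g.2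
    rw [hΓ] at hg
    exact hg.2
  set f : ℕ → Γ → ℝ := fun k g =>
    List.signedCount R (List.chiralPattern k) (C.geodesicWord hT v₀ ((g : Equiv.Perm V) v₀))
    with hf
  have hquasi : ∀ k (a b : Γ), |f k (a * b) - f k a - f k b| ≤
      3 * (4 * (List.chiralPattern k).length + 2) := by
    intro k a b
    have h := C.abs_signedCount_geodesicWord_le hT R (List.chiralPattern_ne_nil k) v₀
      ((a : Equiv.Perm V) v₀) ((a : Equiv.Perm V) ((b : Equiv.Perm V) v₀))
    rwa [C.signedCount_geodesicWord_map hT (hU a) hR] at h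
  have hinv : ∀ k (g : Γ), f k g⁻¹ = - f k g := by
    intro k g
    simp only [hf]
    rw [← List.signedCount_reverse, ← C.geodesicWord_swap,
      ← C.signedCount_geodesicWord_map hT (hU g) hR _ v₀]
    simp
  choose φ hφquasi hφhom hφf using fun k => exists_homogeneous_quasimorphism (hquasi k) (hinv k)
  refine ⟨φ, fun k => ⟨hφquasi k, hφhom k⟩, fun c hc => ?_⟩
  -- The linear combination is a homomorphism, so it vanishes on products of involutions.
  let s : Fin d → Γ := fun i => ⟨C.translation hT v₀ (C.neighbor v₀ i), by
    rw [← SetLike.mem_coe, hΓ]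
    exact C.translation_mem_GFFSet hT F F' _ _⟩
  have hss : ∀ i, s i * s i = 1 := fun i =>
    Subtype.ext (C.translation_neighbor_mul_self hT v₀ i)
  have hψone : (c.sum fun k ck => ck * φ k 1) = 0 := by
    have h := hc 1 1
    rw [mul_one] at h
    linarith
  have hψs : ∀ i, (c.sum fun k ck => ck * φ k (s i)) = 0 := by
    intro i
    have h := hc (s i) (s i)
    rw [hss, hψone] at h
    linarith
  have hψ : ∀ u : List (Fin d), (c.sum fun k ck => ck * φ k (u.map s).prod) = 0 := by
    intro u
    induction u with
    | nil => exact hψone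
    | cons i u ih => rw [List.map_cons, List.prod_cons, hc, hψs, ih, add_zero]
  have hfollow : ∀ u l : List (Fin d),
      (((u.map s).prod : Γ) : Equiv.Perm V) (C.follow v₀ l) = C.follow v₀ (u ++ l) := by
    intro u l
    induction u with
    | nil => rfl
    | cons i u ih =>
      rw [List.map_cons, List.prod_cons, Subgroup.coe_mul, Equiv.Perm.mul_apply, ih]
      exact C.translation_follow hT v₀ (C.neighbor v₀ i) (u ++ l)
  have hfu : ∀ k (u : List (Fin d)), u.IsChain (· ≠ ·) →
      f k (u.map s).prod = List.signedCount R (List.chiralPattern k) u := by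
    intro k u hu
    have h := hfollow u []
    rw [List.append_nil, C.follow_nil] at h
    simp only [hf]
    rw [C.geodesicWord_eq hT hu h.symm]
  -- Hence the linear combination of the counting functions is bounded on these products.
  have hbound : ∀ u : List (Fin d), |c.sum fun k ck => ck * f k (u.map s).prod| ≤
      ∑ k ∈ c.support, |c k| * (3 * (4 * (List.chiralPattern k).length + 2)) := by
    intro u
    have h : (c.sum fun k ck => ck * f k (u.map s).prod) =
        ∑ k ∈ c.support, -(c k * (φ k (u.map s).prod - f k (u.map s).prod)) := by
      have h₀ := hψ u
      rw [Finsupp.sum] at h₀ ⊢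
      simp only [mul_sub, neg_sub, Finset.sum_sub_distrib]
      rw [h₀, sub_zero]
    rw [h]
    refine (Finset.abs_sum_le_sum_abs _ _).trans (Finset.sum_le_sum fun k _ => ?_)
    rw [abs_neg, abs_mul]
    exact mul_le_mul_of_nonneg_left (hφf k _) (abs_nonneg _)
  set M := ∑ k ∈ c.support, |c k| * (3 * (4 * ((List.chiralPattern k).length : ℝ) + 2)) with hM
  ext k
  rw [Finsupp.zero_apply]
  by_contra hk
  obtain ⟨K, hK⟩ := exists_nat_gt (M / |c k|)
  rw [div_lt_iff₀ (abs_pos.2 hk)] at hK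
  obtain ⟨u, hu, huK, huj⟩ := hgaps.exists_word k K
  have hsum : (c.sum fun j cj => cj * f j (u.map s).prod) =
      c k * List.signedCount R (List.chiralPattern k) u := by
    rw [Finsupp.sum, Finset.sum_eq_single k, hfu k u hu]
    · intro j _ hj
      rw [hfu j u hu, huj j hj, mul_zero]
    · intro h
      rw [Finsupp.notMem_support_iff.1 h, zero_mul]
  have h := hbound u
  rw [hsum, abs_mul] at h
  have h' : |c k| * K ≤ |c k| * |List.signedCount R (List.chiralPattern k) u| :=
    mul_le_mul_of_nonneg_left (huK.trans (le_abs_self _)) (abs_nonneg _)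
  linarith
end
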